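/- arXiv:2311.13550 — 5 statements merged into one kernel-verified Lean document; each statement's English description precedes it below -/
import Mathlib

section
/- Let $P_n$ denote the number of partitions of the vertex set of the $n\times n$ grid graph into $n$ parts, each of size $n$ and each inducing a connected subgraph. Then $\limsup_{n\to\infty} P_n^{1/n^2} \le \exp(4C/\pi)$, where $C = \sum_{k=0}^{\infty} \frac{(-1)^k}{(2k+1)^2}$ is Catalan's constant. -/
open Filter

/-- The `n × n` grid graph: vertices are pairs in `Fin n × Fin n`, adjacent iff they agree
in one coordinate and differ by exactly 1 in the other. -/
def gridGraph (n : ℕ) : SimpleGraph (Fin n × Fin n) :=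
  SimpleGraph.fromRel (fun a b =>
    (a.1 = b.1 ∧ (a.2 : ℕ) + 1 = (b.2 : ℕ)) ∨ (a.2 = b.2 ∧ (a.1 : ℕ) + 1 = (b.1 : ℕ)))

/-- `P` is a partition of the vertex set of the `n × n` grid graph into `n` parts,
each of size `n` and each inducing a connected subgraph. -/
def IsGridPartition (n : ℕ) (P : Finset (Finset (Fin n × Fin n))) : Prop :=
  P.card = n ∧
  (∀ s ∈ P, s.card = n) ∧
  (∀ s ∈ P, ((gridGraph n).induce (↑s : Set (Fin n × Fin n))).Connected) ∧
  (∀ v : Fin n × Fin n, ∃! s, s ∈ P ∧ v ∈ s)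

/-- The number of partitions of the `n × n` grid graph into `n` connected parts of size `n`. -/
noncomputable def gridPartitionCount (n : ℕ) : ℕ :=
  Nat.card {P : Finset (Finset (Fin n × Fin n)) // IsGridPartition n P}

/-- The cut score of a partition: the number of edges of the grid graph whose two endpoints
lie in different parts. -/
noncomputable def cutScore (n : ℕ) (P : Finset (Finset (Fin n × Fin n))) : ℕ :=
  {e ∈ (gridGraph n).edgeSet | ¬ ∃ s ∈ P, ∀ v ∈ e, v ∈ s}.ncard

/-- Catalan's constant. -/
noncomputable def catalanConst : ℝ := ∑' k : ℕ, (-1) ^ k / (2 * (k : ℝ) + 1) ^ 2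

/-! Give each connected part of a partition of the grid a spanning tree directed towards a root.
The partition can be read off from the resulting rooted forest, which has one root per part. By the
matrix-forest theorem, `det (ε + L)`, for `L` the Laplacian of a discrete torus containing the grid,
is the sum of `ε ^ #roots` over all rooted spanning forests of the torus; hence the sum of
`ε ^ #parts` over any family of connected partitions is at most `det (ε + L)`.

Characters diagonalise `L`. Writing `2 cosh θ_j = ε + 4 - 2 cos (2πj/n)`, the product over the other
frequency is `2 cosh (n θ_j) - 2 ≤ exp (n θ_j)`, so `log det (ε + L) ≤ n * ∑ j, θ_j`. At `ε = 0` the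
sum is `2 * ∑ j, arsinh (sin (πj/n))`, a Riemann sum for `∫ arsinh (sin u) = 2C` over `[0, π]`, and
`ε > 0` increases each term by at most `√ε`. With `ε` of order `#parts / n ^ 2 → 0`, the weights
`ε ^ #parts` are `exp (o(n ^ 2))` and do not contribute to the limit. -/

section RootedForest

open Finset Matrix

variable {V D R : Type*}

/-- `Step next f w v` says that the map `f`, which either marks a vertex as a root (`none`) or
selects one of its labelled out-arcs `v → next d v` (`some d`), leads from `v` to `w`. The target
comes first so that absence of infinite `f`-paths is well-foundedness of `Step next f`. -/
def Step (next : D → V → V) (f : V → Option D) (w v : V) : Prop :=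
  ∃ d ∈ f v, next d v = w

/-- The out-degree Laplacian of the multidigraph with arcs `v → next d v`, shifted by `ε`: it sends
`x` to `v ↦ ε * x v + ∑ d, (x v - x (next d v))`. Loops contribute nothing. -/
def shiftedLaplacian [DecidableEq V] [Fintype D] [Ring R] (next : D → V → V) (ε : R) :
    Matrix V V R :=
  Matrix.of fun v => Pi.single v ε + ∑ d, (Pi.single v 1 - Pi.single (next d v) 1)

/-- The term indexed by `f` in the multilinear expansion of `shiftedLaplacian next ε` along its
rows. -/
def choiceMatrix [DecidableEq V] [Ring R] (next : D → V → V) (ε : R) (f : V → Option D) :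
    Matrix V V R :=
  Matrix.of fun v => (f v).elim (Pi.single v ε) fun d => Pi.single v 1 - Pi.single (next d v) 1

lemma shiftedLaplacian_mulVec [Fintype V] [DecidableEq V] [Fintype D] [Ring R]
    (next : D → V → V) (ε : R) (x : V → R) (v : V) :
    (shiftedLaplacian next ε *ᵥ x) v = ε * x v + ∑ d, (x v - x (next d v)) := by
  change (Pi.single v ε + ∑ d, (Pi.single v 1 - Pi.single (next d v) 1)) ⬝ᵥ x = _
  simp only [add_dotProduct, sum_dotProduct, sub_dotProduct, single_dotProduct, one_mul]

lemma choiceMatrix_mulVec [Fintype V] [DecidableEq V] [Ring R] (next : D → V → V) (ε : R)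
    (f : V → Option D) (x : V → R) (v : V) :
    (choiceMatrix next ε f *ᵥ x) v = (f v).elim (ε * x v) fun d => x v - x (next d v) := by
  change (f v).elim (Pi.single v ε) (fun d => Pi.single v 1 - Pi.single (next d v) 1) ⬝ᵥ x = _
  cases f v <;> simp only [Option.elim, sub_dotProduct, single_dotProduct, one_mul]

variable [Fintype V] [DecidableEq V] [CommRing R]

lemma det_shiftedLaplacian_eq_sum_choiceMatrix [Fintype D] (next : D → V → V) (ε : R) :
    (shiftedLaplacian next ε).det = ∑ f : V → Option D, (choiceMatrix next ε f).det := by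
  classical
  have hrows : shiftedLaplacian next ε = fun v => ∑ o : Option D,
      o.elim (Pi.single v ε : V → R) fun d => Pi.single v 1 - Pi.single (next d v) 1 := by
    funext v
    rw [Fintype.sum_option]
    rfl
  rw [hrows]
  exact Matrix.detRowAlternating.toMultilinearMap.map_sum _

/-- Among the vertices moved by a permutation `σ ≠ 1`, the preimage of a minimal one indexes a
vanishing factor of the Leibniz term of `σ`. -/
lemma det_eq_prod_diag_of_wellFounded {r : V → V → Prop} (hr : WellFounded r) (M : Matrix V V R)
    (hM : ∀ v w, v ≠ w → M v w ≠ 0 → r w v) : M.det = ∏ v, M v v := by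
  rw [Matrix.det_apply, sum_eq_single 1 _ (by simp)]
  · simp
  intro σ _ hσ
  obtain ⟨v, hv, hmin⟩ := hr.has_min {v | σ v ≠ v} (by
    contrapose! hσ
    ext v
    simpa using Set.eq_empty_iff_forall_notMem.1 hσ v)
  have hmoved : σ (σ⁻¹ v) ≠ σ⁻¹ v := fun h => hv (by simpa using congrArg σ h)
  have hzero : M (σ (σ⁻¹ v)) (σ⁻¹ v) = 0 := by
    by_contra h
    exact hmin _ hmoved (by simpa using hM _ _ hmoved h)
  rw [prod_eq_zero (f := fun i => M (σ i) i) (mem_univ (σ⁻¹ v)) hzero, smul_zero]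

lemma det_choiceMatrix_of_wellFounded {next : D → V → V} {f : V → Option D}
    (hf : WellFounded (Step next f)) (ε : R) :
    (choiceMatrix next ε f).det = ε ^ #{v | f v = none} := by
  rw [det_eq_prod_diag_of_wellFounded hf, ← prod_const, prod_filter]
  · refine prod_congr rfl fun v _ => ?_
    rcases hv : f v with _ | d
    · simp [choiceMatrix, hv]
    · have hloop : next d v ≠ v := fun h => hf.irrefl.irrefl v ⟨d, hv, h⟩
      simp [choiceMatrix, hv, hloop.symm]
  · intro v w hvw hne
    rcases hv : f v with _ | d
    · simp [choiceMatrix, hv, hvw.symm] at hne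
    · refine ⟨d, hv, ?_⟩
      by_contra hdw
      simp [choiceMatrix, hv, hvw.symm, Ne.symm hdw] at hne

/-- The indicator of the vertices from which `f` never reaches a root is a kernel vector. -/
lemma det_choiceMatrix_of_not_wellFounded {next : D → V → V} {f : V → Option D}
    (hf : ¬ WellFounded (Step next f)) (ε : R) : (choiceMatrix next ε f).det = 0 := by
  classical
  let x : V → R := fun v => if Acc (Step next f) v then 0 else 1
  have hker : choiceMatrix next ε f *ᵥ x = 0 := by
    funext v
    rcases hv : f v with _ | d
    · have hacc : Acc (Step next f) v := ⟨v, fun w ⟨d, hd, _⟩ => by simp [hv] at hd⟩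
      simp [choiceMatrix_mulVec, hv, x, hacc]
    · have hacc : Acc (Step next f) v ↔ Acc (Step next f) (next d v) :=
        ⟨fun h => h.inv ⟨d, hv, rfl⟩, fun h => ⟨v, fun w ⟨d', hd', hw⟩ => by
          obtain rfl : d = d' := by simpa [hv] using hd'
          exact hw ▸ h⟩⟩
      simp [choiceMatrix_mulVec, hv, x, hacc]
  obtain ⟨v, hv⟩ : ∃ v, ¬ Acc (Step next f) v := by
    by_contra! h
    exact hf ⟨h⟩
  have hdet : (choiceMatrix next ε f).det • x = 0 := by
    rw [← Matrix.one_mulVec x, ← Matrix.smul_mulVec, ← Matrix.adjugate_mul, ← Matrix.mulVec_mulVec,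
      hker, Matrix.mulVec_zero]
  simpa [x, hv] using congrFun hdet v

open Classical in
/-- The matrix-forest theorem: the surviving maps `f` are the spanning forests directed towards
their roots. -/
theorem det_shiftedLaplacian [Fintype D] (next : D → V → V) (ε : R) :
    (shiftedLaplacian next ε).det =
      ∑ f : V → Option D with WellFounded (Step next f), ε ^ #{v | f v = none} := by
  rw [det_shiftedLaplacian_eq_sum_choiceMatrix, sum_filter]
  refine sum_congr rfl fun f _ => ?_
  split_ifs with hf
  · exact det_choiceMatrix_of_wellFounded hf ε
  · exact det_choiceMatrix_of_not_wellFounded hf ε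

end RootedForest

section ConnectedPartition

open Finset

lemma exists_adj_dist_lt {V : Type*} {G : SimpleGraph V} {v r : V} (h : G.Reachable v r)
    (hne : v ≠ r) : ∃ w, G.Adj v w ∧ G.dist w r < G.dist v r := by
  obtain ⟨p, hp⟩ := h.exists_walk_length_eq_dist
  cases p with
  | nil => exact absurd rfl hne
  | cons hadj q =>
    rw [← hp, SimpleGraph.Walk.length_cons]
    exact ⟨_, hadj, Nat.lt_succ_of_le (SimpleGraph.dist_le q)⟩

variable {V D R : Type*} [Fintype V] [DecidableEq V]

/-- Every part of `P` induces a connected subgraph of `G`. -/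
def HasConnectedParts (G : SimpleGraph V) (P : Finpartition (univ : Finset V)) : Prop :=
  ∀ s ∈ P.parts, (G.induce (s : Set V)).Connected

/-- `f` is a rooted spanning forest, directed towards its roots, whose trees span exactly the parts
of `P`. -/
structure IsSpanningForest (next : D → V → V) (P : Finpartition (univ : Finset V))
    (f : V → Option D) : Prop where
  wellFounded : WellFounded (Step next f)
  part_eq : ∀ ⦃w v⦄, Step next f w v → P.part w = P.part v
  existsUnique_root : ∀ s ∈ P.parts, ∃! r, r ∈ s ∧ f r = none

namespace IsSpanningForest

variable {next : D → V → V} {P Q : Finpartition (univ : Finset V)} {f : V → Option D}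

lemma card_roots (h : IsSpanningForest next P f) : #{v | f v = none} = #P.parts := by
  refine card_bij (fun v _ => P.part v) (by simp) (fun v hv w hw hvw => ?_) fun s hs => ?_
  · refine (h.existsUnique_root _ (P.part_mem.2 (mem_univ v))).unique
      ⟨by simp, by simpa using hv⟩ ⟨by simp [show P.part v = P.part w from hvw], by simpa using hw⟩
  · obtain ⟨r, ⟨hrs, hr⟩, -⟩ := h.existsUnique_root s hs
    exact ⟨r, by simpa using hr, P.part_eq_of_mem hs hrs⟩

lemma part_eq_of_eqvGen (h : IsSpanningForest next P f) {v w : V}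
    (hvw : Relation.EqvGen (Step next f) v w) : P.part v = P.part w := by
  induction hvw with
  | rel _ _ hstep => exact h.part_eq hstep
  | refl => rfl
  | symm _ _ _ ih => exact ih.symm
  | trans _ _ _ _ _ ih₁ ih₂ => exact ih₁.trans ih₂

lemma exists_root (h : IsSpanningForest next P f) (v : V) :
    ∃ r, f r = none ∧ Relation.EqvGen (Step next f) v r := by
  induction v using h.wellFounded.induction with
  | _ v ih =>
    rcases hv : f v with _ | d
    · exact ⟨v, hv, .refl v⟩
    · have hstep : Step next f (next d v) v := ⟨d, hv, rfl⟩
      obtain ⟨r, hr, hreach⟩ := ih _ hstep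
      exact ⟨r, hr, .trans _ _ _ (.symm _ _ (.rel _ _ hstep)) hreach⟩

lemma part_eq_part_iff (h : IsSpanningForest next P f) (v w : V) :
    P.part v = P.part w ↔ Relation.EqvGen (Step next f) v w := by
  refine ⟨fun hvw => ?_, h.part_eq_of_eqvGen⟩
  obtain ⟨r, hr, hvr⟩ := h.exists_root v
  obtain ⟨t, ht, hwt⟩ := h.exists_root w
  have hrt : P.part r = P.part t := by
    rw [← h.part_eq_of_eqvGen hvr, hvw, h.part_eq_of_eqvGen hwt]
  obtain rfl : r = t := (h.existsUnique_root _ (P.part_mem.2 (mem_univ r))).unique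
    ⟨by simp, hr⟩ ⟨by simp [hrt], ht⟩
  exact .trans _ _ _ hvr (.symm _ _ hwt)

lemma partition_unique (hP : IsSpanningForest next P f) (hQ : IsSpanningForest next Q f) :
    P = Q := by
  have hpart : P.part = Q.part := by
    ext v w
    rw [P.mem_part_iff_part_eq_part (mem_univ w) (mem_univ v), hP.part_eq_part_iff,
      Q.mem_part_iff_part_eq_part (mem_univ w) (mem_univ v), hQ.part_eq_part_iff]
  have parts_eq_image (S : Finpartition (univ : Finset V)) : S.parts = univ.image S.part := by
    ext s
    refine ⟨fun hs => ?_, ?_⟩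
    · obtain ⟨v, hv⟩ := S.nonempty_of_mem_parts hs
      exact mem_image.2 ⟨v, mem_univ v, S.part_eq_of_mem hs hv⟩
    · simp +contextual [eq_comm]
  exact Finpartition.ext (by rw [parts_eq_image P, parts_eq_image Q, hpart])

end IsSpanningForest

/-- The edges of `G` with both ends in the same part of `P`. -/
def innerGraph (G : SimpleGraph V) (P : Finpartition (univ : Finset V)) : SimpleGraph V where
  Adj v w := G.Adj v w ∧ P.part v = P.part w
  symm := ⟨fun _ _ h => ⟨h.1.symm, h.2.symm⟩⟩
  loopless := ⟨fun _ h => G.irrefl h.1⟩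

lemma HasConnectedParts.reachable_innerGraph {G : SimpleGraph V}
    {P : Finpartition (univ : Finset V)} (hP : HasConnectedParts G P) {v w : V}
    (hvw : P.part v = P.part w) : (innerGraph G P).Reachable v w := by
  have hs : P.part w ∈ P.parts := P.part_mem.2 (mem_univ w)
  have hv : v ∈ P.part w := by simp [← hvw]
  let toInner : G.induce (P.part w : Set V) →g innerGraph G P :=
    { toFun := Subtype.val
      map_rel' := fun {a b} hab =>
        ⟨hab, (P.part_eq_of_mem hs a.2).trans (P.part_eq_of_mem hs b.2).symm⟩ }
  exact ((hP _ hs).preconnected ⟨v, hv⟩ ⟨w, by simp⟩).map toInner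

/-- In each part, every vertex steps to a neighbour closer to a chosen root of the part. -/
lemma exists_isSpanningForest {G : SimpleGraph V} {next : D → V → V}
    (hnext : ∀ v w, G.Adj v w → ∃ d, next d v = w) {P : Finpartition (univ : Finset V)}
    (hP : HasConnectedParts G P) : ∃ f, IsSpanningForest next P f := by
  let root : V → V := fun v => (Quotient.mk (Setoid.ker P.part) v).out
  have part_root (v : V) : P.part (root v) = P.part v := Quotient.mk_out (s := Setoid.ker P.part) v
  have root_congr {v w : V} (h : P.part v = P.part w) : root v = root w :=
    congrArg Quotient.out (Quotient.sound (s := Setoid.ker P.part) h)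
  let depth : V → ℕ := fun v => (innerGraph G P).dist v (root v)
  have exists_choice (v : V) : ∃ o : Option D, (o = none ↔ v = root v) ∧
      ∀ d ∈ o, P.part (next d v) = P.part v ∧ depth (next d v) < depth v := by
    by_cases hv : v = root v
    · exact ⟨none, by simp [← hv]⟩
    · obtain ⟨w, hadj, hlt⟩ := exists_adj_dist_lt (hP.reachable_innerGraph (part_root v).symm) hv
      obtain ⟨d, rfl⟩ := hnext v w hadj.1
      rw [root_congr hadj.2] at hlt
      exact ⟨some d, by simp [hv], by simpa [depth, root_congr hadj.2] using ⟨hadj.2.symm, hlt⟩⟩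
  choose f f_eq_none f_step using exists_choice
  refine ⟨f, Subrelation.wf ?_ (measure depth).wf, ?_, fun s hs => ?_⟩
  · rintro _ v ⟨d, hd, rfl⟩
    exact (f_step v d hd).2
  · rintro _ v ⟨d, hd, rfl⟩
    exact (f_step v d hd).1
  · obtain ⟨v, hv⟩ := P.nonempty_of_mem_parts hs
    have part_v : P.part v = s := P.part_eq_of_mem hs hv
    refine ⟨root v, ⟨?_, (f_eq_none _).2 (root_congr (part_root v)).symm⟩, fun w hw => ?_⟩
    · rw [← P.part_eq_iff_mem hs, part_root, part_v]
    · rw [(f_eq_none w).1 hw.2]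
      exact root_congr ((P.part_eq_of_mem hs hw.1).trans part_v.symm)

theorem sum_pow_card_parts_le_det [Fintype D] [CommRing R] [PartialOrder R] [IsStrictOrderedRing R]
    {G : SimpleGraph V} {next : D → V → V} (hnext : ∀ v w, G.Adj v w → ∃ d, next d v = w)
    {S : Finset (Finpartition (univ : Finset V))} (hS : ∀ P ∈ S, HasConnectedParts G P)
    {ε : R} (hε : 0 ≤ ε) : ∑ P ∈ S, ε ^ #P.parts ≤ (shiftedLaplacian next ε).det := by
  classical
  choose! F hF using fun P hP => exists_isSpanningForest hnext (hS P hP)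
  have hinj : Set.InjOn F S := fun P hP Q hQ h => (hF P hP).partition_unique (h ▸ hF Q hQ)
  rw [det_shiftedLaplacian]
  calc ∑ P ∈ S, ε ^ #P.parts = ∑ P ∈ S, ε ^ #{v | F P v = none} :=
        sum_congr rfl fun P hP => by rw [(hF P hP).card_roots]
    _ = ∑ f ∈ S.image F, ε ^ #{v | f v = none} := by
        rw [sum_image hinj]
    _ ≤ ∑ f with WellFounded (Step next f), ε ^ #{v | f v = none} := by
        refine sum_le_sum_of_subset_of_nonneg (fun f hf => ?_) fun _ _ _ => pow_nonneg hε _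
        obtain ⟨P, hP, rfl⟩ := mem_image.1 hf
        exact mem_filter.2 ⟨mem_univ _, (hF P hP).wellFounded⟩

end ConnectedPartition

section Torus

open Finset Matrix

/-- The four unit steps on the discrete torus `ℤ/m × ℤ/n`. -/
def torusStep (m n : ℕ) [NeZero m] [NeZero n] (d : Fin 4) (v : Fin m × Fin n) : Fin m × Fin n :=
  v + ![(1, 0), (-1, 0), (0, 1), (0, -1)] d

section PowVal

variable {n : ℕ}

lemma pow_val_add {M : Type*} [Monoid M] {z : M} (hz : z ^ n = 1) (a b : Fin n) :
    z ^ ((a + b : Fin n) : ℕ) = z ^ (a : ℕ) * z ^ (b : ℕ) := by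
  rw [Fin.val_add, ← pow_eq_pow_mod _ hz, pow_add]

variable [NeZero n]

lemma pow_val_one {M : Type*} [Monoid M] {z : M} (hz : z ^ n = 1) :
    z ^ ((1 : Fin n) : ℕ) = z := by
  rw [Fin.val_one', ← pow_eq_pow_mod _ hz, pow_one]

lemma pow_val_neg_one {K : Type*} [DivisionRing K] {z : K} (hz : z ^ n = 1) :
    z ^ ((-1 : Fin n) : ℕ) = z⁻¹ := by
  refine eq_inv_of_mul_eq_one_left ?_
  nth_rw 2 [← pow_val_one hz]
  rw [← pow_val_add hz, neg_add_cancel, Fin.val_zero, pow_zero]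

end PowVal

lemma det_eq_prod_of_mul_eq_mul_diagonal {ι R : Type*} [Fintype ι] [DecidableEq ι] [CommRing R]
    [IsDomain R] {M E : Matrix ι ι R} {μ : ι → R} (hE : E.det ≠ 0)
    (h : M * E = E * diagonal μ) : M.det = ∏ i, μ i := by
  have hdet := congrArg det h
  rw [det_mul, det_mul, mul_comm, det_diagonal] at hdet
  exact mul_left_cancel₀ hE hdet

variable {m n : ℕ} [NeZero m] [NeZero n] {K : Type*} [Field K]

lemma shiftedLaplacian_torusStep_mulVec {z w : K} (hz : z ^ m = 1) (hw : w ^ n = 1) (ε : K) :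
    shiftedLaplacian (torusStep m n) ε *ᵥ (fun v => z ^ (v.1 : ℕ) * w ^ (v.2 : ℕ)) =
      fun v => z ^ (v.1 : ℕ) * w ^ (v.2 : ℕ) * (ε + 4 - z - z⁻¹ - w - w⁻¹) := by
  funext v
  simp only [shiftedLaplacian_mulVec, Fin.sum_univ_four, torusStep, Matrix.cons_val, Prod.fst_add,
    Prod.snd_add, Fin.val_zero, pow_zero, pow_val_add hz, pow_val_add hw, pow_val_one hz,
    pow_val_one hw, pow_val_neg_one hz, pow_val_neg_one hw]
  ring

theorem det_shiftedLaplacian_torusStep {ζ ξ : K} (hζ : IsPrimitiveRoot ζ m)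
    (hξ : IsPrimitiveRoot ξ n) (ε : K) :
    (shiftedLaplacian (torusStep m n) ε).det = ∏ j : Fin m, ∏ k : Fin n,
      (ε + 4 - ζ ^ (j : ℕ) - (ζ ^ (j : ℕ))⁻¹ - ξ ^ (k : ℕ) - (ξ ^ (k : ℕ))⁻¹) := by
  let fourier (l : ℕ) (η : K) : Matrix (Fin l) (Fin l) K := (vandermonde fun i => η ^ (i : ℕ))ᵀ
  have fourier_det {l : ℕ} {η : K} (hη : IsPrimitiveRoot η l) : (fourier l η).det ≠ 0 := by
    rw [det_transpose, det_vandermonde_ne_zero_iff]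
    exact fun i j hij => Fin.ext (hη.pow_inj i.2 j.2 hij)
  have pow_pow_eq_one {l : ℕ} {η : K} (hη : IsPrimitiveRoot η l) (i : ℕ) : (η ^ i) ^ l = 1 := by
    rw [pow_right_comm, hη.pow_eq_one, one_pow]
  rw [← Fintype.prod_prod_type']
  refine det_eq_prod_of_mul_eq_mul_diagonal
    (E := kroneckerMap (· * ·) (fourier m ζ) (fourier n ξ)) ?_ ?_
  · rw [det_kronecker]
    exact mul_ne_zero (pow_ne_zero _ (fourier_det hζ)) (pow_ne_zero _ (fourier_det hξ))
  · ext v w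
    rw [mul_diagonal]
    exact congrFun (shiftedLaplacian_torusStep_mulVec (pow_pow_eq_one hζ w.1)
      (pow_pow_eq_one hξ w.2) ε) v

lemma prod_sub_pow_of_isPrimitiveRoot {ξ : K} (hξ : IsPrimitiveRoot ξ n) (z : K) :
    ∏ k : Fin n, (z - ξ ^ (k : ℕ)) = z ^ n - 1 := by
  have h := congrArg (Polynomial.eval z) (X_pow_sub_C_eq_prod hξ (NeZero.pos n) (one_pow n))
  simpa [Polynomial.eval_prod, Finset.prod_range] using h.symm

lemma prod_add_inv_sub_pow_of_isPrimitiveRoot {ξ : K} (hξ : IsPrimitiveRoot ξ n) {z : K}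
    (hz : z ≠ 0) :
    ∏ k : Fin n, (z + z⁻¹ - ξ ^ (k : ℕ) - (ξ ^ (k : ℕ))⁻¹) = z ^ n + (z ^ n)⁻¹ - 2 := by
  have hfactor (k : Fin n) : z + z⁻¹ - ξ ^ (k : ℕ) - (ξ ^ (k : ℕ))⁻¹ =
      (z - ξ ^ (k : ℕ)) * (z - ξ⁻¹ ^ (k : ℕ)) * z⁻¹ := by
    have : ξ ^ (k : ℕ) ≠ 0 := pow_ne_zero _ (hξ.ne_zero (NeZero.ne n))
    rw [inv_pow]
    field_simp
    ring
  simp only [hfactor, prod_mul_distrib, prod_sub_pow_of_isPrimitiveRoot hξ,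
    prod_sub_pow_of_isPrimitiveRoot hξ.inv, prod_const, card_univ, Fintype.card_fin]
  rw [inv_pow]
  field_simp
  ring

theorem det_shiftedLaplacian_torusStep_eq_prod_cosh {ε : ℝ} {θ : Fin m → ℝ}
    (hθ : ∀ j, 2 * Real.cosh (θ j) = ε + 4 - 2 * Real.cos (2 * Real.pi * j / m)) :
    (shiftedLaplacian (torusStep m n) ε).det = ∏ j, (2 * Real.cosh (n * θ j) - 2) := by
  have hζ := Complex.isPrimitiveRoot_exp m (NeZero.ne m)
  have hξ := Complex.isPrimitiveRoot_exp n (NeZero.ne n)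
  set ζ := Complex.exp (2 * Real.pi * Complex.I / m) with ζ_def
  have hcos (j : ℕ) : ζ ^ j + (ζ ^ j)⁻¹ = 2 * Complex.cos (2 * Real.pi * j / m) := by
    rw [ζ_def, ← Complex.exp_nat_mul, ← Complex.exp_neg, Complex.two_cos]
    congr 2 <;> ring
  have hcosh (j : Fin m) : Complex.exp (θ j) + (Complex.exp (θ j))⁻¹ =
      ε + 4 - ζ ^ (j : ℕ) - (ζ ^ (j : ℕ))⁻¹ := by
    rw [sub_sub, hcos j, ← Complex.exp_neg, ← Complex.two_cosh]
    exact_mod_cast congrArg ((↑) : ℝ → ℂ) (hθ j)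
  have hdet : ((shiftedLaplacian (torusStep m n) ε).det : ℂ) =
      (shiftedLaplacian (torusStep m n) (ε : ℂ)).det := by
    simp only [det_shiftedLaplacian]
    push_cast
    rfl
  rw [← Complex.ofReal_inj, hdet, det_shiftedLaplacian_torusStep hζ hξ]
  push_cast
  refine prod_congr rfl fun j _ => ?_
  simp only [← hcosh j, prod_add_inv_sub_pow_of_isPrimitiveRoot hξ (Complex.exp_ne_zero _)]
  rw [← Complex.exp_nat_mul, ← Complex.exp_neg, ← Complex.two_cosh]

lemma det_shiftedLaplacian_torusStep_le_exp_sum_arsinh {ε : ℝ} (hε : 0 ≤ ε) :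
    (shiftedLaplacian (torusStep m n) ε).det ≤
      Real.exp (n * ∑ j : Fin m, 2 * Real.arsinh √(Real.sin (Real.pi * j / m) ^ 2 + ε / 4)) := by
  set θ : Fin m → ℝ := fun j => 2 * Real.arsinh √(Real.sin (Real.pi * j / m) ^ 2 + ε / 4)
  have θ_nonneg (j) : 0 ≤ θ j :=
    mul_nonneg zero_le_two (Real.arsinh_nonneg_iff.2 (Real.sqrt_nonneg _))
  have hθ (j : Fin m) : 2 * Real.cosh (θ j) = ε + 4 - 2 * Real.cos (2 * Real.pi * j / m) := by
    rw [Real.cosh_two_mul, Real.cosh_sq, Real.sinh_arsinh, Real.sq_sqrt (by positivity),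
      show 2 * Real.pi * (j : ℝ) / m = 2 * (Real.pi * j / m) by ring, Real.cos_two_mul,
      Real.cos_sq']
    ring
  rw [det_shiftedLaplacian_torusStep_eq_prod_cosh hθ, mul_sum, Real.exp_sum]
  refine prod_le_prod (fun j _ => ?_) fun j _ => ?_
  · linarith [Real.one_le_cosh (n * θ j)]
  · have hexp : Real.exp (-(n * θ j)) ≤ 1 :=
      Real.exp_le_one_iff.2 (neg_nonpos.2 (mul_nonneg n.cast_nonneg (θ_nonneg j)))
    rw [Real.cosh_eq]
    linarith

end Torus

section Integral

open MeasureTheory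

lemma hasSum_arctan_div {a : ℝ} (ha₀ : a ≠ 0) (ha₁ : ‖a‖ < 1) :
    HasSum (fun k : ℕ => (-1) ^ k * (a ^ (2 * k) / (2 * (k : ℝ) + 1))) (Real.arctan a / a) := by
  refine ((Real.hasSum_arctan ha₁).div_const a).congr_fun fun k => ?_
  push_cast
  field_simp
  ring

lemma summable_one_div_odd_sq : Summable fun k : ℕ => 1 / (2 * (k : ℝ) + 1) ^ 2 := by
  have hodd : Function.Injective fun k : ℕ => 2 * k + 1 := fun i j h => by simpa using h
  simpa [Function.comp_def] using (Real.summable_one_div_nat_pow.2 one_lt_two).comp_injective hodd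

lemma integral_arctan_div : ∫ a in (0 : ℝ)..1, Real.arctan a / a = catalanConst := by
  have integral_term (k : ℕ) :
      ∫ a in Set.Ioc (0 : ℝ) 1, a ^ (2 * k) / (2 * (k : ℝ) + 1) = 1 / (2 * (k : ℝ) + 1) ^ 2 := by
    rw [← intervalIntegral.integral_of_le zero_le_one, intervalIntegral.integral_div, integral_pow,
      one_pow, zero_pow (Nat.succ_ne_zero _), sub_zero]
    push_cast
    field_simp
  have integral_norm (k : ℕ) :
      ∫ a in Set.Ioc (0 : ℝ) 1, ‖(-1) ^ k * (a ^ (2 * k) / (2 * (k : ℝ) + 1))‖ =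
        1 / (2 * (k : ℝ) + 1) ^ 2 := by
    rw [← integral_term k]
    refine setIntegral_congr_fun measurableSet_Ioc fun a ha => ?_
    have : 0 ≤ a ^ (2 * k) / (2 * (k : ℝ) + 1) := by have := ha.1; positivity
    simp only [norm_mul, norm_pow, norm_neg, norm_one, one_pow, one_mul, Real.norm_of_nonneg this]
  have hint (k : ℕ) : Integrable (fun a : ℝ => (-1) ^ k * (a ^ (2 * k) / (2 * (k : ℝ) + 1)))
      (volume.restrict (Set.Ioc 0 1)) :=
    Continuous.integrableOn_Ioc (by fun_prop)
  have hsum := hasSum_integral_of_summable_integral_norm hint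
    (summable_one_div_odd_sq.congr fun k => (integral_norm k).symm)
  rw [catalanConst, intervalIntegral.integral_of_le zero_le_one, integral_Ioc_eq_integral_Ioo]
  calc ∫ a in Set.Ioo (0 : ℝ) 1, Real.arctan a / a
      = ∫ a in Set.Ioo (0 : ℝ) 1, ∑' k : ℕ, (-1) ^ k * (a ^ (2 * k) / (2 * (k : ℝ) + 1)) :=
        setIntegral_congr_fun measurableSet_Ioo fun a ha => (hasSum_arctan_div ha.1.ne' <| by
          rw [Real.norm_of_nonneg ha.1.le]; exact ha.2).tsum_eq.symm
    _ = ∑' k : ℕ, ∫ a in Set.Ioc (0 : ℝ) 1, (-1) ^ k * (a ^ (2 * k) / (2 * (k : ℝ) + 1)) := by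
        rw [← integral_Ioc_eq_integral_Ioo, hsum.tsum_eq]
    _ = ∑' k : ℕ, (-1) ^ k / (2 * (k : ℝ) + 1) ^ 2 :=
        tsum_congr fun k => by rw [integral_const_mul, integral_term, mul_one_div]

lemma hasDerivAt_arctan_cos_div {a : ℝ} (ha : a ≠ 0) (u : ℝ) :
    HasDerivAt (fun u => -Real.arctan (a * Real.cos u / √(1 + (a * Real.sin u) ^ 2)) / a)
      (Real.sin u * (√(1 + (a * Real.sin u) ^ 2))⁻¹) u := by
  have hpos : 0 < 1 + (a * Real.sin u) ^ 2 := by positivity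
  have hrad := ((((Real.hasDerivAt_sin u).const_mul a).pow 2).const_add 1).sqrt hpos.ne'
  have hquot := ((Real.hasDerivAt_cos u).const_mul a).div hrad (Real.sqrt_pos.2 hpos).ne'
  refine (hquot.arctan.neg.div_const a).congr_deriv ?_
  have hq_pos := Real.sqrt_pos.2 hpos
  have hq_sq := Real.sq_sqrt hpos.le
  simp only [Pi.div_apply, Pi.pow_apply]
  set q := √(1 + (a * Real.sin u) ^ 2)
  have hden : 1 + (a * Real.cos u / q) ^ 2 = (1 + a ^ 2) / q ^ 2 := by
    field_simp
    rw [hq_sq]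
    linear_combination a ^ 2 * Real.sin_sq_add_cos_sq u
  rw [hden]
  field_simp
  rw [hq_sq]
  linear_combination (2 * a ^ 2 * Real.sin u) * Real.sin_sq_add_cos_sq u

lemma continuous_sin_mul_inv_sqrt :
    Continuous fun p : ℝ × ℝ => Real.sin p.1 * (√(1 + (p.2 * Real.sin p.1) ^ 2))⁻¹ :=
  Continuous.mul (by fun_prop) <|
    Continuous.inv₀ (by fun_prop) fun _ => (Real.sqrt_pos.2 (by positivity)).ne'

lemma integral_sin_mul_inv_sqrt {a : ℝ} (ha : a ≠ 0) :
    ∫ u in (0 : ℝ)..Real.pi, Real.sin u * (√(1 + (a * Real.sin u) ^ 2))⁻¹ =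
      2 * (Real.arctan a / a) := by
  rw [intervalIntegral.integral_eq_sub_of_hasDerivAt fun u _ => hasDerivAt_arctan_cos_div ha u]
  · simp only [Real.cos_pi, Real.sin_pi, Real.cos_zero, Real.sin_zero, mul_zero, mul_one, mul_neg,
      ne_eq, OfNat.ofNat_ne_zero, not_false_eq_true, zero_pow, add_zero, Real.sqrt_one, div_one,
      Real.arctan_neg, neg_neg]
    ring
  · exact (continuous_sin_mul_inv_sqrt.comp (Continuous.prodMk_left a)).intervalIntegrable _ _

lemma arsinh_eq_integral (x : ℝ) :
    Real.arsinh x = ∫ a in (0 : ℝ)..1, x * (√(1 + (a * x) ^ 2))⁻¹ := by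
  rw [intervalIntegral.integral_eq_sub_of_hasDerivAt (f := fun a => Real.arsinh (a * x))]
  · simp
  · intro a _
    refine ((hasDerivAt_id a).mul_const x).arsinh.congr_deriv ?_
    simp [mul_comm]
  · refine Continuous.intervalIntegrable (Continuous.mul (by fun_prop) ?_) _ _
    exact Continuous.inv₀ (by fun_prop) fun _ => (Real.sqrt_pos.2 (by positivity)).ne'

theorem integral_arsinh_sin :
    ∫ u in (0 : ℝ)..Real.pi, Real.arsinh (Real.sin u) = 2 * catalanConst := by
  simp only [arsinh_eq_integral]
  rw [intervalIntegral_intervalIntegral_swap, ← integral_arctan_div,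
    ← intervalIntegral.integral_const_mul]
  · refine intervalIntegral.integral_congr_ae (Eventually.of_forall fun a ha => ?_)
    rw [Set.uIoc_of_le zero_le_one] at ha
    exact integral_sin_mul_inv_sqrt ha.1.ne'
  · exact (continuous_sin_mul_inv_sqrt.continuousOn.integrableOn_compact
      (isCompact_uIcc.prod isCompact_uIcc)).mono_set
        (Set.prod_mono Set.uIoc_subset_uIcc Set.uIoc_subset_uIcc)

lemma lipschitzWith_arsinh : LipschitzWith 1 Real.arsinh := by
  refine lipschitzWith_of_nnnorm_deriv_le Real.differentiable_arsinh fun x => ?_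
  rw [(Real.hasDerivAt_arsinh x).deriv, ← NNReal.coe_le_coe, coe_nnnorm,
    Real.norm_of_nonneg (by positivity)]
  exact inv_le_one_of_one_le₀ (Real.one_le_sqrt.2 (le_add_of_nonneg_right (sq_nonneg x)))

lemma riemannSum_le_integral {f : ℝ → ℝ} {K : NNReal} (hf : LipschitzWith K f) (a : ℝ) {h : ℝ}
    (hh : 0 ≤ h) (n : ℕ) :
    h * ∑ k ∈ Finset.range n, f (a + k * h) ≤ (∫ x in a..a + n * h, f x) + n * (K * h ^ 2) := by
  have hint (b c : ℝ) : IntervalIntegrable f volume b c := hf.continuous.intervalIntegrable b c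
  have cell (b : ℝ) : h * f b ≤ (∫ x in b..b + h, f x) + K * h ^ 2 := by
    have hmono : ∫ _ in b..b + h, (f b - K * h) ≤ ∫ x in b..b + h, f x := by
      refine intervalIntegral.integral_mono_on (by linarith) intervalIntegrable_const (hint _ _)
        fun x hx => ?_
      have hdist := hf.dist_le_mul b x
      rw [Real.dist_eq, Real.dist_eq, abs_sub_comm b x, abs_of_nonneg (sub_nonneg.2 hx.1)] at hdist
      have hstep : K * (x - b) ≤ K * h := by gcongr; linarith [hx.2]
      linarith [le_abs_self (f b - f x)]
    rw [intervalIntegral.integral_const, add_sub_cancel_left, smul_eq_mul] at hmono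
    linarith
  induction n with
  | zero => simp
  | succ n ih =>
    have hsplit := intervalIntegral.integral_add_adjacent_intervals (hint a (a + n * h))
      (hint (a + n * h) (a + n * h + h))
    rw [Finset.sum_range_succ, mul_add, Nat.cast_succ, add_one_mul, ← add_assoc a, ← hsplit]
    linarith [cell (a + n * h)]

lemma sum_arsinh_sin_le (n : ℕ) [NeZero n] :
    ∑ k : Fin n, Real.arsinh (Real.sin (Real.pi * k / n)) ≤
      n * (2 * catalanConst / Real.pi) + Real.pi := by
  have hn : (0 : ℝ) < n := Nat.cast_pos.2 (NeZero.pos n)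
  have hriemann := riemannSum_le_integral (lipschitzWith_arsinh.comp Real.lipschitzWith_sin) 0
    (div_nonneg Real.pi_pos.le hn.le) n
  have hsum : ∑ k : Fin n, Real.arsinh (Real.sin (Real.pi * k / n)) =
      ∑ k ∈ Finset.range n, (Real.arsinh ∘ Real.sin) (0 + k * (Real.pi / n)) := by
    rw [Finset.sum_range]
    refine Finset.sum_congr rfl fun k _ => ?_
    rw [Function.comp_apply, zero_add, mul_div_assoc', mul_comm Real.pi]
  rw [← hsum, zero_add, mul_div_cancel₀ _ hn.ne'] at hriemann
  simp only [Function.comp_apply, integral_arsinh_sin, mul_one, NNReal.coe_one, one_mul] at hriemann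
  calc ∑ k : Fin n, Real.arsinh (Real.sin (Real.pi * k / n))
      = n / Real.pi * (Real.pi / n * ∑ k : Fin n, Real.arsinh (Real.sin (Real.pi * k / n))) := by
        field_simp
    _ ≤ n / Real.pi * (2 * catalanConst + n * (Real.pi / n) ^ 2) := by gcongr
    _ = n * (2 * catalanConst / Real.pi) + Real.pi := by field_simp

lemma arsinh_sqrt_sq_add_le {s ε : ℝ} (hs : 0 ≤ s) (hε : 0 ≤ ε) :
    Real.arsinh √(s ^ 2 + ε / 4) ≤ Real.arsinh s + √ε / 2 := by
  have hsqrt : √(s ^ 2 + ε / 4) ≤ s + √ε / 2 := by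
    rw [Real.sqrt_le_left (by positivity)]
    nlinarith [Real.sq_sqrt hε, mul_nonneg hs (Real.sqrt_nonneg ε)]
  have hdist := lipschitzWith_arsinh.dist_le_mul (s + √ε / 2) s
  rw [Real.dist_eq, Real.dist_eq, add_sub_cancel_left, abs_of_nonneg (a := √ε / 2) (by positivity),
    NNReal.coe_one, one_mul] at hdist
  linarith [Real.arsinh_le_arsinh.2 hsqrt, (abs_le.1 hdist).2]

theorem det_shiftedLaplacian_torusStep_le_exp (m n : ℕ) [NeZero m] [NeZero n] {ε : ℝ}
    (hε : 0 ≤ ε) : (shiftedLaplacian (torusStep m n) ε).det ≤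
      Real.exp (n * (m * (4 * catalanConst / Real.pi + √ε) + 2 * Real.pi)) := by
  refine (det_shiftedLaplacian_torusStep_le_exp_sum_arsinh hε).trans (Real.exp_le_exp.2 ?_)
  have hsin (j : Fin m) : 0 ≤ Real.sin (Real.pi * j / m) := by
    refine Real.sin_nonneg_of_nonneg_of_le_pi (by positivity) ?_
    rw [mul_div_assoc]
    exact mul_le_of_le_one_right Real.pi_pos.le
      (div_le_one_of_le₀ (by exact_mod_cast j.2.le) m.cast_nonneg)
  gcongr
  calc ∑ j : Fin m, 2 * Real.arsinh √(Real.sin (Real.pi * j / m) ^ 2 + ε / 4)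
      ≤ ∑ j : Fin m, 2 * (Real.arsinh (Real.sin (Real.pi * j / m)) + √ε / 2) := by
        gcongr with j
        exact arsinh_sqrt_sq_add_le (hsin j) hε
    _ = 2 * ∑ j : Fin m, Real.arsinh (Real.sin (Real.pi * j / m)) + m * √ε := by
        rw [← Finset.mul_sum, Finset.sum_add_distrib, Finset.sum_const, Finset.card_univ,
          Fintype.card_fin, nsmul_eq_mul]
        ring
    _ ≤ 2 * (m * (2 * catalanConst / Real.pi) + Real.pi) + m * √ε := by
        gcongr
        exact sum_arsinh_sin_le m
    _ = m * (4 * catalanConst / Real.pi + √ε) + 2 * Real.pi := by ring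

end Integral

section GridPartition

open Finset Topology

lemma exists_torusStep_eq_of_adj {n : ℕ} [NeZero n] {v w : Fin n × Fin n}
    (h : (gridGraph n).Adj v w) : ∃ d, torusStep n n d v = w := by
  have add_one_eq {a b : Fin n} (hab : (a : ℕ) + 1 = b) : a + 1 = b := by
    ext
    rw [Fin.val_add, Fin.val_one', Nat.add_mod_mod, hab, Nat.mod_eq_of_lt b.2]
  obtain ⟨-, (⟨h₁, h₂⟩ | ⟨h₂, h₁⟩) | (⟨h₁, h₂⟩ | ⟨h₂, h₁⟩)⟩ := h
  · exact ⟨2, Prod.ext (by simp [torusStep, h₁]) (by simp [torusStep, add_one_eq h₂])⟩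
  · exact ⟨0, Prod.ext (by simp [torusStep, add_one_eq h₁]) (by simp [torusStep, h₂])⟩
  · exact ⟨3, Prod.ext (by simp [torusStep, h₁]) (by simp [torusStep, ← add_one_eq h₂])⟩
  · exact ⟨1, Prod.ext (by simp [torusStep, ← add_one_eq h₁]) (by simp [torusStep, h₂])⟩

lemma ncard_le_exp {n : ℕ} [NeZero n] {ε : ℝ} (hε₀ : 0 < ε) (hε₁ : ε ≤ 1)
    {S : Set (Finpartition (univ : Finset (Fin n × Fin n)))}
    (hconn : ∀ P ∈ S, HasConnectedParts (gridGraph n) P)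
    (hcard : ∀ P ∈ S, (#P.parts : ℝ) ≤ ε * n ^ 2) :
    (S.ncard : ℝ) ≤ Real.exp (n ^ 2 *
      (Real.negMulLog ε + √ε + 4 * catalanConst / Real.pi + 2 * Real.pi / n)) := by
  classical
  have hn : (n : ℝ) ≠ 0 := Nat.cast_ne_zero.2 (NeZero.ne n)
  have hS : S.Finite := S.toFinite
  have hweight : S.ncard * Real.exp (-(n ^ 2 * Real.negMulLog ε)) ≤
      Real.exp (n * (n * (4 * catalanConst / Real.pi + √ε) + 2 * Real.pi)) :=
    calc S.ncard * Real.exp (-(n ^ 2 * Real.negMulLog ε))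
        = ∑ P ∈ hS.toFinset, ε ^ (ε * n ^ 2) := by
          rw [sum_const, nsmul_eq_mul, ← Set.ncard_eq_toFinset_card S hS,
            Real.rpow_def_of_pos hε₀, Real.negMulLog]
          congr 2
          ring
      _ ≤ ∑ P ∈ hS.toFinset, ε ^ #P.parts := by
          refine sum_le_sum fun P hP => ?_
          have hP : (#P.parts : ℝ) ≤ ε * n ^ 2 := hcard P (hS.mem_toFinset.1 hP)
          exact (Real.rpow_le_rpow_of_exponent_ge hε₀ hε₁ hP).trans_eq (Real.rpow_natCast _ _)
      _ ≤ (shiftedLaplacian (torusStep n n) ε).det :=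
          sum_pow_card_parts_le_det (fun _ _ => exists_torusStep_eq_of_adj)
            (fun P hP => hconn P (hS.mem_toFinset.1 hP)) hε₀.le
      _ ≤ _ := det_shiftedLaplacian_torusStep_le_exp n n hε₀.le
  rw [Real.exp_neg, ← div_eq_mul_inv, div_le_iff₀ (Real.exp_pos _), ← Real.exp_add] at hweight
  refine hweight.trans_eq (congrArg Real.exp ?_)
  field_simp
  ring

lemma limsup_rpow_le_exp {c a : ℕ → ℝ} {A : ℝ} (hc : ∀ n, 0 ≤ c n)
    (hca : ∀ᶠ n : ℕ in atTop, c n ≤ Real.exp (n ^ 2 * a n)) (ha : Tendsto a atTop (𝓝 A)) :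
    limsup (fun n : ℕ => c n ^ (1 / (n : ℝ) ^ 2)) atTop ≤ Real.exp A := by
  have hlim := (Real.continuous_exp.tendsto A).comp ha
  rw [← hlim.limsup_eq]
  refine limsup_le_limsup ?_ ?_ hlim.isBoundedUnder_le
  · filter_upwards [hca, eventually_gt_atTop 0] with n hn hpos
    have hn₀ : (n : ℝ) ≠ 0 := Nat.cast_ne_zero.2 hpos.ne'
    calc c n ^ (1 / (n : ℝ) ^ 2) ≤ Real.exp (n ^ 2 * a n) ^ (1 / (n : ℝ) ^ 2) :=
          Real.rpow_le_rpow (hc n) hn (by positivity)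
      _ = Real.exp (a n) := by
          rw [← Real.exp_mul]
          congr 1
          field_simp
  · exact IsCoboundedUnder.of_frequently_ge (a := 0)
      (Frequently.of_forall fun n => Real.rpow_nonneg (hc n) _)

theorem grid_partition_count_upper_general {m : ℕ → ℕ}
    (hm : (fun n => (m n : ℝ)) =o[atTop] fun n => (n : ℝ) ^ 2)
    {S : ∀ n, Set (Finpartition (univ : Finset (Fin n × Fin n)))}
    (hcard : ∀ n, ∀ P ∈ S n, #P.parts ≤ m n)
    (hconn : ∀ n, ∀ P ∈ S n, HasConnectedParts (gridGraph n) P) :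
    limsup (fun n : ℕ => ((S n).ncard : ℝ) ^ (1 / (n : ℝ) ^ 2)) atTop ≤
      Real.exp (4 * catalanConst / Real.pi) := by
  -- The summand `1` keeps the weight positive where `m` vanishes.
  let ε : ℕ → ℝ := fun n => (m n + 1) / (n : ℝ) ^ 2
  have ε_lim : Tendsto ε atTop (𝓝 0) := by
    have hone : Tendsto (fun n : ℕ => 1 / (n : ℝ) ^ 2) atTop (𝓝 0) :=
      tendsto_const_div_pow 1 2 two_ne_zero
    simpa only [ε, add_div, add_zero] using hm.tendsto_div_nhds_zero.add hone
  have exponent_lim : Tendsto (fun n => Real.negMulLog (ε n) + √(ε n) +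
      4 * catalanConst / Real.pi + 2 * Real.pi / n) atTop (𝓝 (4 * catalanConst / Real.pi)) := by
    have hlog := (Real.continuous_negMulLog.tendsto 0).comp ε_lim
    have hsqrt := (Real.continuous_sqrt.tendsto 0).comp ε_lim
    simpa using ((hlog.add hsqrt).add_const (4 * catalanConst / Real.pi)).add
      (tendsto_const_div_atTop_nhds_zero_nat (2 * Real.pi))
  refine limsup_rpow_le_exp (fun n => Nat.cast_nonneg _) ?_ exponent_lim
  filter_upwards [eventually_gt_atTop 0, ε_lim.eventually_le_const one_pos] with n hn hε
  have : NeZero n := ⟨hn.ne'⟩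
  refine ncard_le_exp (by positivity) hε (hconn n) fun P hP => ?_
  have : (#P.parts : ℝ) ≤ m n := mod_cast hcard n P hP
  rw [div_mul_cancel₀ _ (by positivity)]
  linarith

lemma IsGridPartition.exists_finpartition {n : ℕ} {P : Finset (Finset (Fin n × Fin n))}
    (hP : IsGridPartition n P) :
    ∃ Q : Finpartition (univ : Finset (Fin n × Fin n)), Q.parts = P := by
  refine ⟨Finpartition.ofExistsUnique P (fun _ _ => subset_univ _) (fun v _ => ?_) ?_, rfl⟩
  · simpa using hP.2.2.2 v
  · intro hempty
    obtain ⟨v, hv⟩ := (hP.2.2.1 ∅ hempty).nonempty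
    simp at hv

lemma gridPartitionCount_eq_ncard (n : ℕ) :
    gridPartitionCount n =
      {P : Finpartition (univ : Finset (Fin n × Fin n)) | IsGridPartition n P.parts}.ncard := by
  have hinj : Function.Injective
      (Finpartition.parts : Finpartition (univ : Finset (Fin n × Fin n)) → _) :=
    fun _ _ => Finpartition.ext
  have himage : Finpartition.parts '' {P : Finpartition univ | IsGridPartition n P.parts} =
      {P | IsGridPartition n P} := by
    ext P
    constructor
    · rintro ⟨Q, hQ, rfl⟩
      exact hQ
    · intro hP
      obtain ⟨Q, rfl⟩ := hP.exists_finpartition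
      exact ⟨Q, hP, rfl⟩
  rw [← Set.ncard_image_of_injective _ hinj, himage]
  exact Nat.card_coe_set_eq _

end GridPartition

theorem grid_partition_count_upper :
    limsup (fun n : ℕ => (gridPartitionCount n : ℝ) ^ (1 / (n : ℝ) ^ 2)) atTop ≤
      Real.exp (4 * catalanConst / Real.pi) := by
  simp only [gridPartitionCount_eq_ncard]
  exact grid_partition_count_upper_general
    ((Asymptotics.isLittleO_pow_pow_atTop_of_lt one_lt_two).natCast_atTop.congr_left (by simp))
    (fun n P hP => hP.1.le) (fun n P hP => hP.2.2.1)
end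

section
/- Let $P_n$ denote the number of partitions of the vertex set of the $n\times n$ grid graph into $n$ parts, each of size $n$ and each inducing a connected subgraph. Then $\liminf_{n\to\infty} P_n^{1/n^2} \ge 3^{1/6}$. -/
open Filter

/-!
Cut the grid into `⌊n / 4⌋` bands of four consecutive rows, leaving at most three rows as parts of
their own. In column-major order a band splits into two halves of `2 * n` cells. In a left half,
choose a histogram standing on its bottom row, with `⌊n / 2⌋` columns of heights `1`, `2` or `3` and
area `n`. The histogram is connected through the bottom row and its complement through the top row,
and both have `n` cells; right halves are treated alike after a half turn. Distinct choices
give distinct partitions.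

There are `3 ^ ⌊n / 2⌋` sequences of heights, and by pigeonhole and reflection the prescribed area
costs only a polynomial factor. With `2 * ⌊n / 4⌋` independent halves this yields
`3 ^ (n ^ 2 / 4)` partitions up to a subexponential factor.

A partition is determined by the edges inside its parts, so there are at most
`2 ^ (2 * n ^ 2) = 4 ^ n ^ 2` of them. This bounds the sequence, without which its real `liminf`
would be a junk value.
-/

/-! ### Internal edges and the upper bound -/

section Connectivity

variable {V : Type*} {G : SimpleGraph V}

lemma induce_connected_of_descent {S : Set V} {root : V} (hroot : root ∈ S) (μ : V → ℕ)
    (descent : ∀ v ∈ S, v = root ∨ ∃ w ∈ S, G.Adj v w ∧ μ w < μ v) :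
    (G.induce S).Connected := by
  have reachable_root (v : S) : (G.induce S).Reachable v ⟨root, hroot⟩ := by
    induction hk : μ v using Nat.strong_induction_on generalizing v with
    | _ k ih =>
      obtain hv | ⟨w, hw, hadj, hlt⟩ := descent v v.2
      · rw [Subtype.ext (a2 := ⟨root, hroot⟩) hv]
      · have hvw : (G.induce S).Adj v ⟨w, hw⟩ := hadj
        exact hvw.reachable.trans (ih (μ w) (hk ▸ hlt) ⟨w, hw⟩ rfl)
  exact
    { nonempty := ⟨root, hroot⟩
      preconnected := fun v w => (reachable_root v).trans (reachable_root w).symm }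

variable (G) in
/-- The edges of `G` both of whose endpoints lie in a common member of the family `P`; the
complement of the cut of `P`. A partition into connected parts is determined by this set. -/
def internalEdges (P : Finset (Finset V)) : Set (Sym2 V) :=
  {e ∈ G.edgeSet | ∃ s ∈ P, ∀ v ∈ e, v ∈ s}

lemma part_subset_part_of_internalEdges_subset {P Q : Finset (Finset V)} {s t : Finset V} {v : V}
    (hs : s ∈ P) (hconn : (G.induce (s : Set V)).Connected)
    (ht : t ∈ Q) (hQ : ∀ v, ∃! s, s ∈ Q ∧ v ∈ s)
    (hPQ : internalEdges G P ⊆ internalEdges G Q) (hvs : v ∈ s) (hvt : v ∈ t) : s ⊆ t := by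
  intro w hw
  have hpath := (SimpleGraph.reachable_iff_reflTransGen _ _).1
    (hconn.preconnected ⟨v, hvs⟩ ⟨w, hw⟩)
  suffices ∀ b : (s : Set V), Relation.ReflTransGen (G.induce (s : Set V)).Adj ⟨v, hvs⟩ b →
      (b : V) ∈ t from this _ hpath
  intro b hb
  induction hb with
  | refl => exact hvt
  | @tail a b _ hab ha =>
    have hedge : s((a : V), (b : V)) ∈ internalEdges G P := ⟨hab, s, hs, by
      rintro x hx
      obtain rfl | rfl := Sym2.mem_iff.1 hx
      exacts [a.2, b.2]⟩
    obtain ⟨-, t', ht', hmem⟩ := hPQ hedge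
    rw [(hQ a).unique ⟨ht, ha⟩ ⟨ht', hmem a (Sym2.mem_mk_left _ _)⟩]
    exact hmem b (Sym2.mem_mk_right _ _)

lemma subset_of_internalEdges_eq {P Q : Finset (Finset V)}
    (hPconn : ∀ s ∈ P, (G.induce (s : Set V)).Connected)
    (hQconn : ∀ s ∈ Q, (G.induce (s : Set V)).Connected)
    (hP : ∀ v, ∃! s, s ∈ P ∧ v ∈ s) (hQ : ∀ v, ∃! s, s ∈ Q ∧ v ∈ s)
    (hPQ : internalEdges G P = internalEdges G Q) : P ⊆ Q := by
  intro s hs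
  obtain ⟨⟨v, hvs⟩⟩ := (hPconn s hs).nonempty
  obtain ⟨t, ⟨ht, hvt⟩, -⟩ := hQ v
  have hst : s ⊆ t :=
    part_subset_part_of_internalEdges_subset hs (hPconn s hs) ht hQ hPQ.subset hvs hvt
  have hts : t ⊆ s :=
    part_subset_part_of_internalEdges_subset ht (hQconn t ht) hs hP hPQ.superset hvt hvs
  rwa [hst.antisymm hts]

end Connectivity

lemma gridGraph_adj_of_col_succ {n : ℕ} {u v : Fin n × Fin n} (hrow : u.1 = v.1)
    (hcol : (u.2 : ℕ) + 1 = v.2) : (gridGraph n).Adj u v := by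
  refine (SimpleGraph.fromRel_adj _ _ _).2 ⟨?_, .inl (.inl ⟨hrow, hcol⟩)⟩
  rintro rfl
  omega

lemma gridGraph_adj_of_row_succ {n : ℕ} {u v : Fin n × Fin n} (hcol : u.2 = v.2)
    (hrow : (u.1 : ℕ) + 1 = v.1) : (gridGraph n).Adj u v := by
  refine (SimpleGraph.fromRel_adj _ _ _).2 ⟨?_, .inl (.inr ⟨hcol, hrow⟩)⟩
  rintro rfl
  omega

lemma ncard_edgeSet_gridGraph_le (n : ℕ) : (gridGraph n).edgeSet.ncard ≤ 2 * n ^ 2 := by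
  let H : Set ((Fin n × Fin n) × (Fin n × Fin n)) :=
    {p | p.1.1 = p.2.1 ∧ (p.1.2 : ℕ) + 1 = p.2.2}
  let K : Set ((Fin n × Fin n) × (Fin n × Fin n)) :=
    {p | p.1.2 = p.2.2 ∧ (p.1.1 : ℕ) + 1 = p.2.1}
  have ncard_le {T : Set ((Fin n × Fin n) × (Fin n × Fin n))} (hT : T.InjOn Prod.fst) :
      T.ncard ≤ n ^ 2 := by
    calc T.ncard ≤ (Set.univ : Set (Fin n × Fin n)).ncard :=
          Set.ncard_le_ncard_of_injOn _ (fun _ _ => Set.mem_univ _) hT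
      _ = n ^ 2 := by simp [Set.ncard_univ, sq]
  have hH : H.ncard ≤ n ^ 2 := ncard_le <| by
    rintro ⟨u, v⟩ ⟨hrow, hcol⟩ ⟨u', v'⟩ ⟨hrow', hcol'⟩ (rfl : u = u')
    exact Prod.ext rfl (Prod.ext (hrow.symm.trans hrow') (Fin.ext (hcol.symm.trans hcol')))
  have hK : K.ncard ≤ n ^ 2 := ncard_le <| by
    rintro ⟨u, v⟩ ⟨hcol, hrow⟩ ⟨u', v'⟩ ⟨hcol', hrow'⟩ (rfl : u = u')
    exact Prod.ext rfl (Prod.ext (Fin.ext (hrow.symm.trans hrow')) (hcol.symm.trans hcol'))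
  have hedges : (gridGraph n).edgeSet ⊆ (fun p => s(p.1, p.2)) '' (H ∪ K) := by
    intro e
    induction e with
    | _ u v =>
      intro huv
      rw [SimpleGraph.mem_edgeSet, gridGraph, SimpleGraph.fromRel_adj] at huv
      obtain ⟨-, h | h⟩ := huv
      exacts [⟨(u, v), h, rfl⟩, ⟨(v, u), h, Sym2.eq_swap⟩]
  calc (gridGraph n).edgeSet.ncard ≤ (H ∪ K).ncard :=
        (Set.ncard_le_ncard hedges).trans Set.ncard_image_le
    _ ≤ H.ncard + K.ncard := Set.ncard_union_le _ _
    _ ≤ 2 * n ^ 2 := by omega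

lemma gridPartitionCount_le (n : ℕ) : gridPartitionCount n ≤ 4 ^ n ^ 2 := by
  have hinj : Set.InjOn (internalEdges (gridGraph n)) {P | IsGridPartition n P} := by
    rintro P ⟨-, -, hPconn, hP⟩ Q ⟨-, -, hQconn, hQ⟩ hPQ
    exact (subset_of_internalEdges_eq hPconn hQconn hP hQ hPQ).antisymm
      (subset_of_internalEdges_eq hQconn hPconn hQ hP hPQ.symm)
  calc gridPartitionCount n = {P | IsGridPartition n P}.ncard := rfl
    _ ≤ (𝒫 (gridGraph n).edgeSet).ncard :=
        Set.ncard_le_ncard_of_injOn _ (fun _ _ => Set.sep_subset _ _) hinj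
    _ = 2 ^ (gridGraph n).edgeSet.ncard := Set.ncard_powerset _
    _ ≤ 2 ^ (2 * n ^ 2) := Nat.pow_le_pow_right two_pos (ncard_edgeSet_gridGraph_le n)
    _ = 4 ^ n ^ 2 := by rw [pow_mul]; norm_num

/-! ### Counting profiles -/

/-- Sequences of `w` column increments in `{0, 1, 2}` with total `σ`. Raising every entry by one
gives the column heights of a histogram of width `w` and area `w + σ`. -/
abbrev Profile (w σ : ℕ) : Type := {y : Fin w → Fin 3 // ∑ k, (y k : ℕ) = σ}

namespace Profile

variable {w w' σ σ' : ℕ}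

/-- The increments of a profile as a function on all of `ℕ`, extended by `0`. -/
def increment (y : Profile w σ) (k : ℕ) : ℕ := if h : k < w then y.1 ⟨k, h⟩ else 0

lemma increment_val (y : Profile w σ) (k : Fin w) : y.increment k = y.1 k := by
  simp [increment]

lemma increment_le_two (y : Profile w σ) (k : ℕ) : y.increment k ≤ 2 := by
  unfold increment
  split_ifs <;> omega

lemma increment_eq_zero (y : Profile w σ) {k : ℕ} (hk : w ≤ k) : y.increment k = 0 :=
  dif_neg hk.not_gt

lemma sum_increment (y : Profile w σ) : ∑ k ∈ Finset.range w, y.increment k = σ := by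
  rw [← Fin.sum_univ_eq_sum_range]
  simpa only [increment_val] using y.2

lemma card_mul_card_le :
    Fintype.card (Profile w σ) * Fintype.card (Profile w' σ') ≤
      Fintype.card (Profile (w + w') (σ + σ')) := by
  rw [← Fintype.card_prod]
  refine Fintype.card_le_of_injective
    (fun y => ⟨Fin.append y.1.1 y.2.1, by simp [Fin.sum_univ_add, y.1.2, y.2.2]⟩) ?_
  rintro ⟨⟨u, _⟩, ⟨v, _⟩⟩ ⟨⟨u', _⟩, ⟨v', _⟩⟩ h
  have h' : (u, v) = (u', v') := (Fin.appendEquiv w w').injective (congrArg Subtype.val h)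
  simpa using h'

lemma card_le_card_rev : Fintype.card (Profile w σ) ≤ Fintype.card (Profile w (2 * w - σ)) := by
  refine Fintype.card_le_of_injective (fun y => ⟨fun k => (y.1 k).rev, ?_⟩) ?_
  · have hadd : ∑ k, ((y.1 k).rev : ℕ) + ∑ k, (y.1 k : ℕ) = 2 * w := by
      rw [← Finset.sum_add_distrib, Finset.sum_congr rfl (g := fun _ => 2)]
      · simp [mul_comm]
      · intro k _
        rw [Fin.val_rev]
        omega
    rw [y.2] at hadd
    exact Nat.eq_sub_of_add_eq hadd
  · intro y z h
    exact Subtype.ext (funext fun k => Fin.rev_injective (congrFun (congrArg Subtype.val h) k))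

lemma exists_three_pow_le_card (w : ℕ) :
    ∃ σ ≤ 2 * w, 3 ^ w ≤ (2 * w + 1) * Fintype.card (Profile w σ) := by
  obtain ⟨σ, hσ, hmax⟩ := Finset.exists_max_image (Finset.range (2 * w + 1))
    (fun σ => Fintype.card (Profile w σ)) Finset.nonempty_range_add_one
  refine ⟨σ, Finset.mem_range_succ_iff.1 hσ, ?_⟩
  have hsum (y : Fin w → Fin 3) : ∑ k, (y k : ℕ) ∈ Finset.range (2 * w + 1) := by
    have : ∑ k, (y k : ℕ) ≤ ∑ _k : Fin w, 2 := Finset.sum_le_sum fun k _ => by omega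
    simp only [Finset.sum_const, Finset.card_univ, Fintype.card_fin, smul_eq_mul] at this
    rw [Finset.mem_range]
    omega
  calc 3 ^ w = (Finset.univ : Finset (Fin w → Fin 3)).card := by simp
    _ ≤ Fintype.card (Profile w σ) * (Finset.range (2 * w + 1)).card :=
        Finset.card_le_mul_card_image_of_maps_to (fun y _ => hsum y) _ fun τ hτ => by
          simpa only [Fintype.card_subtype] using hmax τ hτ
    _ = (2 * w + 1) * Fintype.card (Profile w σ) := by rw [Finset.card_range, mul_comm]

/-- By pigeonhole some total `σ` is popular among the profiles of width `m`; reflecting entries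
makes `2 * m - σ` equally popular, and the concatenations have total exactly `2 * m`. -/
lemma three_pow_le_card_central (m : ℕ) :
    3 ^ (2 * m) ≤ (2 * m + 1) ^ 2 * Fintype.card (Profile (2 * m) (2 * m)) := by
  obtain ⟨σ, hσ, hpop⟩ := exists_three_pow_le_card m
  have hconcat : Fintype.card (Profile m σ) * Fintype.card (Profile m (2 * m - σ)) ≤
      Fintype.card (Profile (2 * m) (2 * m)) := by
    have := card_mul_card_le (w := m) (w' := m) (σ := σ) (σ' := 2 * m - σ)
    rwa [← two_mul, Nat.add_sub_cancel' hσ] at this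
  calc 3 ^ (2 * m) = 3 ^ m * 3 ^ m := by rw [two_mul, pow_add]
    _ ≤ ((2 * m + 1) * Fintype.card (Profile m σ)) *
          ((2 * m + 1) * Fintype.card (Profile m (2 * m - σ))) :=
        Nat.mul_le_mul hpop (hpop.trans (Nat.mul_le_mul_left _ card_le_card_rev))
    _ = (2 * m + 1) ^ 2 * (Fintype.card (Profile m σ) * Fintype.card (Profile m (2 * m - σ))) := by
        ring
    _ ≤ (2 * m + 1) ^ 2 * Fintype.card (Profile (2 * m) (2 * m)) := Nat.mul_le_mul_left _ hconcat

/-- Write `n = 4 * m + r` with `2 ≤ r ≤ 5`; the remaining `r / 2` columns can always be filled. -/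
lemma three_pow_le_card_half {n : ℕ} (hn : 2 ≤ n) :
    3 ^ (2 * ((n - 2) / 4)) ≤ n ^ 2 * Fintype.card (Profile (n / 2) (n - n / 2)) := by
  set m := (n - 2) / 4
  obtain ⟨r, hr, hnr⟩ : ∃ r ∈ Finset.Icc 2 5, n = 4 * m + r :=
    ⟨n - 4 * m, by rw [Finset.mem_Icc]; omega, by omega⟩
  have hpos : 1 ≤ Fintype.card (Profile (r / 2) (r - r / 2)) := by
    rw [Nat.one_le_iff_ne_zero]
    fin_cases hr <;> decide
  have hcard : Fintype.card (Profile (2 * m) (2 * m)) ≤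
      Fintype.card (Profile (n / 2) (n - n / 2)) := by
    have happend := card_mul_card_le (w := 2 * m) (w' := r / 2) (σ := 2 * m) (σ' := r - r / 2)
    rw [show n / 2 = 2 * m + r / 2 by omega,
      show n - (2 * m + r / 2) = 2 * m + (r - r / 2) by omega]
    exact (Nat.le_mul_of_pos_right _ hpos).trans happend
  calc 3 ^ (2 * m) ≤ (2 * m + 1) ^ 2 * Fintype.card (Profile (2 * m) (2 * m)) :=
        three_pow_le_card_central m
    _ ≤ n ^ 2 * Fintype.card (Profile (n / 2) (n - n / 2)) := by gcongr; omega

end Profile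

/-! ### Addressing the cells of the grid -/

section FiberPartition

variable {V ι : Type*} [Fintype V] [DecidableEq V] [Fintype ι] [DecidableEq ι]

/-- The family of all fibers of `f`. It is a partition of `V` when `f` is surjective. -/
def fiberPartition (f : V → ι) : Finset (Finset V) :=
  Finset.univ.image fun l => Finset.univ.filter (f · = l)

lemma exists_mem_fiberPartition_iff (f : V → ι) (v w : V) :
    (∃ s ∈ fiberPartition f, v ∈ s ∧ w ∈ s) ↔ f v = f w := by
  simp [fiberPartition, eq_comm]

lemma apply_eq_iff_of_fiberPartition_eq {f g : V → ι} (h : fiberPartition f = fiberPartition g)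
    (v w : V) : f v = f w ↔ g v = g w := by
  rw [← exists_mem_fiberPartition_iff, h, exists_mem_fiberPartition_iff]

lemma existsUnique_mem_fiberPartition (f : V → ι) (v : V) :
    ∃! s, s ∈ fiberPartition f ∧ v ∈ s := by
  refine ⟨({w | f w = f v} : Finset V), by simp [fiberPartition], ?_⟩
  rintro s ⟨hs, hv⟩
  obtain ⟨l, -, rfl⟩ := Finset.mem_image.1 hs
  rw [(Finset.mem_filter.1 hv).2]

lemma card_fiberPartition {f : V → ι} (hf : Function.Surjective f) :
    (fiberPartition f).card = Fintype.card ι := by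
  refine Finset.card_image_of_injective _ fun l l' h => ?_
  obtain ⟨v, rfl⟩ := hf l
  simpa using h.le (Finset.mem_filter.2 ⟨Finset.mem_univ v, rfl⟩)

end FiberPartition

lemma isGridPartition_fiberPartition {n : ℕ} {ι : Type*} [Fintype ι] [DecidableEq ι]
    (f : Fin n × Fin n → ι) (hι : Fintype.card ι = n)
    (hcard : ∀ l, (Finset.univ.filter (f · = l)).card = n)
    (hconn : ∀ l, ((gridGraph n).induce {v | f v = l}).Connected) :
    IsGridPartition n (fiberPartition f) := by
  have hsurj : Function.Surjective f := fun l =>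
    let ⟨⟨v, hv⟩⟩ := (hconn l).nonempty
    ⟨v, hv⟩
  refine ⟨(card_fiberPartition hsurj).trans hι, ?_, ?_, existsUnique_mem_fiberPartition f⟩
  · intro s hs
    obtain ⟨l, -, rfl⟩ := Finset.mem_image.1 hs
    exact hcard l
  · intro s hs
    obtain ⟨l, -, rfl⟩ := Finset.mem_image.1 hs
    rw [Finset.coe_filter_univ]
    exact hconn l

/-- The half-bands of the `n × n` grid. A band consists of four consecutive rows; its left half
(`false`) is formed by its first `2 * n` cells in column-major order and its right half (`true`)
by the others, so that for odd `n` the middle column is shared. -/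
abbrev HalfBand (n : ℕ) : Type := Fin (n / 4) × Bool

/-- Addresses of the cells of the `n × n` grid: a position in a half-band, or a position in one
of the `n % 4` rows left over by the bands. Positions in a left half-band are counted in
column-major order from its outer corner; a right half-band is a left one after a half turn. -/
abbrev Site (n : ℕ) : Type := HalfBand n × Fin (2 * n) ⊕ Fin (n % 4) × Fin n

/-- The districts of the construction: a lower (`true`) and an upper (`false`) one in each
half-band, and each leftover row. -/
abbrev District (n : ℕ) : Type := HalfBand n × Bool ⊕ Fin (n % 4)

lemma card_district (n : ℕ) : Fintype.card (District n) = n := by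
  simp only [Fintype.card_sum, Fintype.card_prod, Fintype.card_fin, Fintype.card_bool]
  omega

namespace Site

variable {n : ℕ}

/-- The cell with a given address. -/
def cell : Site n → Fin n × Fin n
  | .inl ((b, false), c) => (⟨4 * b + c % 4, by omega⟩, ⟨c / 4, by omega⟩)
  | .inl ((b, true), c) => (⟨4 * b + (3 - c % 4), by omega⟩, ⟨n - 1 - c / 4, by omega⟩)
  | .inr (r, j) => (⟨4 * (n / 4) + r, by omega⟩, j)

lemma cell_injective : Function.Injective (cell (n := n)) := by
  rintro (⟨⟨b, _ | _⟩, c⟩ | ⟨r, j⟩) (⟨⟨b', _ | _⟩, c'⟩ | ⟨r', j'⟩) h <;>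
  simp only [cell, Prod.mk.injEq, Fin.ext_iff, Sum.inl.injEq, Sum.inr.injEq, reduceCtorEq,
    and_true, and_false] at h ⊢ <;> omega

lemma cell_bijective : Function.Bijective (cell (n := n)) := by
  refine (Fintype.bijective_iff_injective_and_card _).2 ⟨cell_injective, ?_⟩
  simp only [Fintype.card_sum, Fintype.card_prod, Fintype.card_fin, Fintype.card_bool]
  calc n / 4 * 2 * (2 * n) + n % 4 * n = (4 * (n / 4) + n % 4) * n := by ring
    _ = n * n := by rw [Nat.div_add_mod]

/-- The addressing as an equivalence between addresses and cells. -/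
noncomputable def cellEquiv (n : ℕ) : Site n ≃ Fin n × Fin n :=
  Equiv.ofBijective cell cell_bijective

lemma cell_adj_of_add_one (h : HalfBand n) {c c' : Fin (2 * n)} (hc : (c : ℕ) % 4 < 3)
    (hcc' : (c : ℕ) + 1 = c') : (gridGraph n).Adj (cell (.inl (h, c))) (cell (.inl (h, c'))) := by
  obtain ⟨b, _ | _⟩ := h
  · exact gridGraph_adj_of_row_succ (Fin.ext (by simp only [cell]; omega))
      (by simp only [cell]; omega)
  · exact (gridGraph_adj_of_row_succ (Fin.ext (by simp only [cell]; omega))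
      (by simp only [cell]; omega)).symm

lemma cell_adj_of_add_four (h : HalfBand n) {c c' : Fin (2 * n)} (hcc' : (c : ℕ) + 4 = c') :
    (gridGraph n).Adj (cell (.inl (h, c))) (cell (.inl (h, c'))) := by
  obtain ⟨b, _ | _⟩ := h
  · exact gridGraph_adj_of_col_succ (Fin.ext (by simp only [cell]; omega))
      (by simp only [cell]; omega)
  · exact (gridGraph_adj_of_col_succ (Fin.ext (by simp only [cell]; omega))
      (by simp only [cell]; omega)).symm

lemma cell_adj_of_col_succ (r : Fin (n % 4)) {j j' : Fin n} (hjj' : (j : ℕ) + 1 = j') :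
    (gridGraph n).Adj (cell (.inr (r, j))) (cell (.inr (r, j'))) :=
  gridGraph_adj_of_col_succ rfl hjj'

end Site

/-! ### The districts of a family of histograms -/

namespace Profile

variable {n w σ : ℕ}

/-- Whether position `c` of a half-band, in column `c / 4` and row `c % 4`, lies in the histogram
of `y`. The columns of the histogram stand on row `3` and have height `y.increment k + 1`. -/
def inHistogram (y : Profile w σ) (c : ℕ) : Bool := decide (3 ≤ c % 4 + y.increment (c / 4))

lemma sum_inHistogram (y : Profile w σ) (m : ℕ) :
    ∑ c ∈ Finset.range (4 * m), (if y.inHistogram c = true then 1 else 0) =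
      ∑ k ∈ Finset.range m, (y.increment k + 1) := by
  induction m with
  | zero => simp
  | succ m ih =>
    rw [Finset.sum_range_succ, ← ih, mul_add, mul_one, Finset.sum_range_add]
    have hcol (r : ℕ) (hr : r < 4) :
        y.inHistogram (4 * m + r) = decide (3 ≤ r + y.increment m) := by
      rw [inHistogram, Nat.mul_add_mod, Nat.mod_eq_of_lt hr, Nat.mul_add_div four_pos,
        Nat.div_eq_of_lt hr, add_zero]
    have := y.increment_le_two m
    simp only [Finset.sum_range_succ, Finset.sum_range_zero, zero_add, hcol, Nat.reduceLT,
      decide_eq_true_eq]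
    split_ifs <;> omega

lemma card_inHistogram (y : Profile (n / 2) (n - n / 2)) :
    (Finset.univ.filter fun c : Fin (2 * n) => y.inHistogram c = true).card = n := by
  have houtside : ∀ c ∈ Finset.range (2 * n), c ∉ Finset.range (4 * (n / 2)) →
      (if y.inHistogram c = true then 1 else 0) = 0 := by
    intro c hc hc'
    rw [Finset.mem_range] at hc hc'
    have := y.increment_eq_zero (k := c / 4) (by omega)
    simp only [inHistogram, decide_eq_true_eq, ite_eq_right_iff]
    omega
  calc (Finset.univ.filter fun c : Fin (2 * n) => y.inHistogram c = true).card
    _ = ∑ c ∈ Finset.range (2 * n), (if y.inHistogram c = true then 1 else 0) := by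
        rw [Finset.card_filter,
          ← Fin.sum_univ_eq_sum_range (fun c => if y.inHistogram c = true then 1 else 0)]
    _ = ∑ c ∈ Finset.range (4 * (n / 2)), (if y.inHistogram c = true then 1 else 0) :=
        (Finset.sum_subset (Finset.range_mono (by omega)) houtside).symm
    _ = n - n / 2 + n / 2 := by
        rw [sum_inHistogram, Finset.sum_add_distrib, sum_increment]
        simp
    _ = n := by omega

lemma card_inHistogram_eq (y : Profile (n / 2) (n - n / 2)) (t : Bool) :
    (Finset.univ.filter fun c : Fin (2 * n) => y.inHistogram c = t).card = n := by
  cases t with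
  | true => exact y.card_inHistogram
  | false =>
    have h := Finset.card_filter_add_card_filter_not (s := Finset.univ)
      fun c : Fin (2 * n) => y.inHistogram c = true
    simp only [y.card_inHistogram, Finset.card_univ, Fintype.card_fin, Bool.not_eq_true] at h
    omega

lemma increment_eq_of_inHistogram_eq {y z : Profile w σ} {k : ℕ}
    (h : ∀ r < 4, y.inHistogram (4 * k + r) = z.inHistogram (4 * k + r)) :
    y.increment k = z.increment k := by
  have hr (r : ℕ) (hr : r < 4) : 3 ≤ r + y.increment k ↔ 3 ≤ r + z.increment k := by
    have hdiv : (4 * k + r) / 4 = k := by omega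
    have hmod : (4 * k + r) % 4 = r := by omega
    simpa [inHistogram, hdiv, hmod] using h r hr
  have hy := y.increment_le_two k
  have hz := z.increment_le_two k
  have h1 := hr 1 (by norm_num)
  have h2 := hr 2 (by norm_num)
  omega

end Profile

/-- A choice of a histogram of area `n` in every half-band. -/
abbrev ProfileFamily (n : ℕ) : Type := HalfBand n → Profile (n / 2) (n - n / 2)

namespace ProfileFamily

variable {n : ℕ}

/-- The district containing a site. -/
def siteDistrict (y : ProfileFamily n) : Site n → District n
  | .inl (h, c) => .inl (h, (y h).inHistogram c)
  | .inr (r, _) => .inr r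

/-- The district containing a cell. -/
noncomputable def cellDistrict (y : ProfileFamily n) (v : Fin n × Fin n) : District n :=
  y.siteDistrict ((Site.cellEquiv n).symm v)

lemma cellDistrict_cell (y : ProfileFamily n) (a : Site n) :
    y.cellDistrict a.cell = y.siteDistrict a :=
  congrArg y.siteDistrict ((Site.cellEquiv n).symm_apply_apply a)

lemma siteDistrict_eq_inl_iff {y : ProfileFamily n} {a : Site n} {h : HalfBand n} {t : Bool} :
    y.siteDistrict a = .inl (h, t) ↔
      ∃ c : Fin (2 * n), (y h).inHistogram c = t ∧ .inl (h, c) = a := by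
  obtain ⟨h', c⟩ | ⟨r, j⟩ := a
  · simp only [siteDistrict, Sum.inl.injEq, Prod.mk.injEq]
    constructor
    · rintro ⟨rfl, ht⟩
      exact ⟨c, ht, rfl, rfl⟩
    · rintro ⟨c, ht, rfl, rfl⟩
      exact ⟨rfl, ht⟩
  · simp [siteDistrict]

lemma siteDistrict_eq_inr_iff {y : ProfileFamily n} {a : Site n} {r : Fin (n % 4)} :
    y.siteDistrict a = .inr r ↔ ∃ j, .inr (r, j) = a := by
  obtain ⟨h', c⟩ | ⟨r', j⟩ := a <;> simp [siteDistrict, eq_comm]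

lemma card_siteDistrict_eq (y : ProfileFamily n) (l : District n) :
    (Finset.univ.filter (y.siteDistrict · = l)).card = n := by
  obtain ⟨h, t⟩ | r := l
  · calc (Finset.univ.filter (y.siteDistrict · = .inl (h, t))).card
      _ = ((Finset.univ.filter fun c : Fin (2 * n) => (y h).inHistogram c = t).image
            fun c => (.inl (h, c) : Site n)).card := by
          congr 1
          ext a
          simp [siteDistrict_eq_inl_iff]
      _ = (Finset.univ.filter fun c : Fin (2 * n) => (y h).inHistogram c = t).card :=
          Finset.card_image_of_injective _ fun c c' hcc' => by simpa using hcc'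
      _ = n := (y h).card_inHistogram_eq t
  · calc (Finset.univ.filter (y.siteDistrict · = .inr r)).card
      _ = (Finset.univ.image fun j : Fin n => (.inr (r, j) : Site n)).card := by
          congr 1
          ext a
          simp [siteDistrict_eq_inr_iff]
      _ = (Finset.univ : Finset (Fin n)).card :=
          Finset.card_image_of_injective _ fun j j' hjj' => by simpa using hjj'
      _ = n := Finset.card_fin n

lemma card_cellDistrict_eq (y : ProfileFamily n) (l : District n) :
    (Finset.univ.filter (y.cellDistrict · = l)).card = n :=
  (Finset.card_equiv (Site.cellEquiv n).symm fun v => by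
    rw [Finset.mem_filter_univ, Finset.mem_filter_univ, cellDistrict]).trans
    (y.card_siteDistrict_eq l)

lemma connected_of_site_descent (y : ProfileFamily n) {l : District n} {root : Site n}
    (hroot : y.siteDistrict root = l) (μ : Site n → ℕ)
    (descent : ∀ a, y.siteDistrict a = l →
      a = root ∨ ∃ a', y.siteDistrict a' = l ∧ (gridGraph n).Adj a.cell a'.cell ∧ μ a' < μ a) :
    ((gridGraph n).induce {v | y.cellDistrict v = l}).Connected := by
  refine induce_connected_of_descent (root := root.cell) ((y.cellDistrict_cell root).trans hroot)
    (fun v => μ ((Site.cellEquiv n).symm v)) ?_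
  intro v hv
  obtain ⟨a, rfl⟩ := Site.cell_bijective.surjective v
  have symm_cell (a : Site n) : (Site.cellEquiv n).symm a.cell = a :=
    (Site.cellEquiv n).symm_apply_apply a
  obtain rfl | ⟨a', ha', hadj, hlt⟩ := descent a ((y.cellDistrict_cell a).symm.trans hv)
  · exact .inl rfl
  · exact .inr ⟨a'.cell, (y.cellDistrict_cell a').trans ha', hadj, by simpa only [symm_cell]⟩

lemma connected_of_position_descent (y : ProfileFamily n) {h : HalfBand n} {t : Bool}
    {root : Fin (2 * n)} (hroot : (y h).inHistogram root = t) (μ : Fin (2 * n) → ℕ)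
    (descent : ∀ c : Fin (2 * n), (y h).inHistogram c = t →
      c = root ∨ ∃ c' : Fin (2 * n), (y h).inHistogram c' = t ∧
        (gridGraph n).Adj (Site.cell (.inl (h, c))) (Site.cell (.inl (h, c'))) ∧ μ c' < μ c) :
    ((gridGraph n).induce {v | y.cellDistrict v = .inl (h, t)}).Connected := by
  refine y.connected_of_site_descent (siteDistrict_eq_inl_iff.2 ⟨root, hroot, rfl⟩)
    (Sum.elim (fun a => μ a.2) fun _ => 0) fun a ha => ?_
  obtain ⟨c, hc, rfl⟩ := siteDistrict_eq_inl_iff.1 ha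
  obtain rfl | ⟨c', hc', hadj, hlt⟩ := descent c hc
  · exact .inl rfl
  · exact .inr ⟨.inl (h, c'), siteDistrict_eq_inl_iff.2 ⟨c', hc', rfl⟩, hadj, hlt⟩

/-- Walk up the current column, then along row `0`. -/
lemma connected_upper (hn : 0 < n) (y : ProfileFamily n) (h : HalfBand n) :
    ((gridGraph n).induce {v | y.cellDistrict v = .inl (h, false)}).Connected := by
  have hle := (y h).increment_le_two
  have upper_of_mod_eq_zero {c : ℕ} (hc : c % 4 = 0) : (y h).inHistogram c = false := by
    have := hle (c / 4)
    rw [Profile.inHistogram, decide_eq_false_iff_not]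
    omega
  refine y.connected_of_position_descent (root := ⟨0, by omega⟩) (upper_of_mod_eq_zero rfl)
    Fin.val fun c hc => ?_
  obtain hrow | hrow : (c : ℕ) % 4 = 0 ∨ 0 < (c : ℕ) % 4 := Nat.eq_zero_or_pos _
  · obtain hcol | hcol : (c : ℕ) = 0 ∨ 4 ≤ (c : ℕ) := by omega
    · exact .inl (Fin.ext hcol)
    · exact .inr ⟨⟨c - 4, by omega⟩, upper_of_mod_eq_zero (by simp only; omega),
        (Site.cell_adj_of_add_four h (by simp only; omega)).symm, by simp only; omega⟩
  · refine .inr ⟨⟨c - 1, by omega⟩, ?_,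
      (Site.cell_adj_of_add_one h (by simp only; omega) (by simp only; omega)).symm,
      by simp only; omega⟩
    have hdiv : ((c : ℕ) - 1) / 4 = c / 4 := by omega
    rw [Profile.inHistogram, decide_eq_false_iff_not] at hc ⊢
    simp only [hdiv]
    omega

/-- Walk down the current column, then along row `3`. -/
lemma connected_lower (hn : 2 ≤ n) (y : ProfileFamily n) (h : HalfBand n) :
    ((gridGraph n).induce {v | y.cellDistrict v = .inl (h, true)}).Connected := by
  have lower_of_mod_eq_three {c : ℕ} (hc : c % 4 = 3) : (y h).inHistogram c = true := by
    rw [Profile.inHistogram, decide_eq_true_iff]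
    omega
  refine y.connected_of_position_descent (root := ⟨3, by omega⟩) (lower_of_mod_eq_three rfl)
    (fun c => 4 * (c / 4 : ℕ) + 3 - c % 4) fun c hc => ?_
  obtain hrow | hrow : (c : ℕ) % 4 = 3 ∨ (c : ℕ) % 4 < 3 := by omega
  · obtain hcol | hcol : (c : ℕ) = 3 ∨ 4 ≤ (c : ℕ) := by omega
    · exact .inl (Fin.ext hcol)
    · exact .inr ⟨⟨c - 4, by omega⟩, lower_of_mod_eq_three (by simp only; omega),
        (Site.cell_adj_of_add_four h (by simp only; omega)).symm, by simp only; omega⟩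
  · rw [Profile.inHistogram, decide_eq_true_iff] at hc
    have hcol : (c : ℕ) / 4 < n / 2 := by
      by_contra hcol
      rw [(y h).increment_eq_zero (not_lt.1 hcol)] at hc
      omega
    refine .inr ⟨⟨c + 1, by omega⟩, ?_, Site.cell_adj_of_add_one h hrow rfl, by simp only; omega⟩
    have hdiv : ((c : ℕ) + 1) / 4 = c / 4 := by omega
    rw [Profile.inHistogram, decide_eq_true_iff]
    simp only [hdiv]
    omega

lemma connected_row (hn : 0 < n) (y : ProfileFamily n) (r : Fin (n % 4)) :
    ((gridGraph n).induce {v | y.cellDistrict v = .inr r}).Connected := by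
  refine y.connected_of_site_descent (root := .inr (r, ⟨0, hn⟩)) rfl
    (Sum.elim (fun _ => 0) fun a => a.2) fun a ha => ?_
  obtain ⟨j, rfl⟩ := siteDistrict_eq_inr_iff.1 ha
  obtain hj | hj := Nat.eq_zero_or_pos (j : ℕ)
  · exact .inl (by rw [show j = ⟨0, hn⟩ from Fin.ext hj])
  · exact .inr ⟨.inr (r, ⟨j - 1, by omega⟩), rfl,
      (Site.cell_adj_of_col_succ r (Nat.sub_add_cancel hj)).symm, Nat.sub_lt hj one_pos⟩

lemma isGridPartition (hn : 2 ≤ n) (y : ProfileFamily n) :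
    IsGridPartition n (fiberPartition y.cellDistrict) := by
  refine isGridPartition_fiberPartition _ (card_district n) y.card_cellDistrict_eq ?_
  rintro (⟨h, _ | _⟩ | r)
  · exact y.connected_upper (by omega) h
  · exact y.connected_lower hn h
  · exact y.connected_row (by omega) r

lemma inHistogram_iff_of_fiberPartition_eq {y z : ProfileFamily n}
    (hyz : fiberPartition y.cellDistrict = fiberPartition z.cellDistrict) (h : HalfBand n)
    (c c' : Fin (2 * n)) :
    (y h).inHistogram c = (y h).inHistogram c' ↔ (z h).inHistogram c = (z h).inHistogram c' := by
  have := apply_eq_iff_of_fiberPartition_eq hyz (Site.cell (.inl (h, c)))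
    (Site.cell (.inl (h, c')))
  simpa only [cellDistrict_cell, siteDistrict, Sum.inl.injEq, Prod.mk.injEq, true_and] using this

/-- The top cell of a column is never in the histogram, so the parts of the partition determine
membership in the histogram for the other cells of the column. -/
lemma fiberPartition_cellDistrict_injective :
    Function.Injective fun y : ProfileFamily n => fiberPartition y.cellDistrict := by
  intro y z hyz
  funext h
  refine Subtype.ext (funext fun k => Fin.ext ?_)
  rw [← Profile.increment_val, ← Profile.increment_val]
  have top_not_mem (y : ProfileFamily n) : (y h).inHistogram (4 * k) = false := by
    have := (y h).increment_le_two (4 * k / 4)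
    rw [Profile.inHistogram, decide_eq_false_iff_not]
    omega
  refine Profile.increment_eq_of_inHistogram_eq fun r hr => ?_
  have := inHistogram_iff_of_fiberPartition_eq hyz h ⟨4 * k + r, by omega⟩ ⟨4 * k, by omega⟩
  simpa only [top_not_mem, ← Bool.not_eq_true, not_iff_not, ← Bool.eq_iff_iff] using this

end ProfileFamily

lemma card_profile_pow_le {n : ℕ} (hn : 2 ≤ n) :
    Fintype.card (Profile (n / 2) (n - n / 2)) ^ (2 * (n / 4)) ≤ gridPartitionCount n := by
  calc Fintype.card (Profile (n / 2) (n - n / 2)) ^ (2 * (n / 4))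
    _ = Nat.card (ProfileFamily n) := by simp [mul_comm 2]
    _ ≤ gridPartitionCount n :=
        Nat.card_le_card_of_injective (fun y => ⟨_, y.isGridPartition hn⟩) fun _ _ h =>
          ProfileFamily.fiberPartition_cellDistrict_injective (congrArg Subtype.val h)

/-- With `m = (n - 2) / 4` and `q = n / 4`, the profile bound gives `3 ^ (4 * m * q)` up to a
factor `n ^ n`, and `n ^ 2 ≤ 16 * m * q + 8 * n`. -/
lemma three_pow_sq_le {n : ℕ} (hn : 2 ≤ n) :
    3 ^ n ^ 2 ≤ ((9 * n) ^ n * gridPartitionCount n) ^ 4 := by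
  set m := (n - 2) / 4
  set q := n / 4
  set C := Fintype.card (Profile (n / 2) (n - n / 2))
  have hexp : n ^ 2 ≤ 8 * n + 2 * m * (2 * q) * 4 := by
    have hm' : n ≤ 4 * m + 5 := by omega
    have hq' : n ≤ 4 * q + 3 := by omega
    have hm'' : 4 * m + 2 ≤ n := by omega
    nlinarith [Nat.mul_le_mul hm' hq']
  have hprofile : 3 ^ (2 * m * (2 * q)) ≤ n ^ n * gridPartitionCount n :=
    calc 3 ^ (2 * m * (2 * q)) = (3 ^ (2 * m)) ^ (2 * q) := pow_mul ..
      _ ≤ (n ^ 2 * C) ^ (2 * q) := Nat.pow_le_pow_left (Profile.three_pow_le_card_half hn) _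
      _ = n ^ (2 * (2 * q)) * C ^ (2 * q) := by rw [mul_pow, ← pow_mul]
      _ ≤ n ^ n * gridPartitionCount n :=
          Nat.mul_le_mul (Nat.pow_le_pow_right (by omega) (by omega)) (card_profile_pow_le hn)
  calc 3 ^ n ^ 2 ≤ 3 ^ (8 * n + 2 * m * (2 * q) * 4) := Nat.pow_le_pow_right three_pos hexp
    _ = (9 ^ n * 3 ^ (2 * m * (2 * q))) ^ 4 := by
        rw [pow_add, pow_mul _ _ 4, mul_pow, ← pow_mul, ← pow_mul, show 8 * n = 2 * (n * 4) by ring,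
          pow_mul 3 2]
        norm_num only
    _ ≤ (9 ^ n * (n ^ n * gridPartitionCount n)) ^ 4 :=
        Nat.pow_le_pow_left (Nat.mul_le_mul_left _ hprofile) 4
    _ = ((9 * n) ^ n * gridPartitionCount n) ^ 4 := by rw [← mul_assoc, ← mul_pow]

/-! ### Asymptotics -/

lemma three_rpow_quarter_le {n : ℕ} (hn : 2 ≤ n) :
    (3 : ℝ) ^ (1 / 4 : ℝ) ≤
      (9 * n : ℝ) ^ (1 / n : ℝ) * (gridPartitionCount n : ℝ) ^ (1 / n ^ 2 : ℝ) := by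
  have hn0 : (n : ℝ) ≠ 0 := by positivity
  have hpow : (3 : ℝ) ^ n ^ 2 ≤ ((9 * n) ^ n * gridPartitionCount n) ^ 4 := by
    exact_mod_cast three_pow_sq_le hn
  calc (3 : ℝ) ^ (1 / 4 : ℝ) = ((3 : ℝ) ^ n ^ 2) ^ (1 / (4 * n ^ 2) : ℝ) := by
        rw [← Real.rpow_natCast, ← Real.rpow_mul (by norm_num)]
        congr 1
        push_cast
        field_simp
    _ ≤ (((9 * n) ^ n * gridPartitionCount n : ℝ) ^ 4) ^ (1 / (4 * n ^ 2) : ℝ) := by gcongr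
    _ = ((9 * n) ^ n * gridPartitionCount n : ℝ) ^ (1 / n ^ 2 : ℝ) := by
        rw [← Real.rpow_natCast _ 4, ← Real.rpow_mul (by positivity)]
        congr 1
        push_cast
        field_simp
    _ = (9 * n : ℝ) ^ (1 / n : ℝ) * (gridPartitionCount n : ℝ) ^ (1 / n ^ 2 : ℝ) := by
        rw [Real.mul_rpow (by positivity) (by positivity), ← Real.rpow_natCast _ n,
          ← Real.rpow_mul (by positivity)]
        congr 2
        field_simp

lemma tendsto_nine_mul_rpow_inv :
    Tendsto (fun n : ℕ => (9 * n : ℝ) ^ (1 / n : ℝ)) atTop (nhds 1) := by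
  have hlim : Tendsto (fun n : ℕ => (9 * n : ℝ)) atTop atTop :=
    tendsto_natCast_atTop_atTop.const_mul_atTop (by norm_num)
  refine ((tendsto_rpow_div_mul_add 9 1 0 zero_ne_one).comp hlim).congr fun n => ?_
  have hexp : 9 / (1 * (9 * n) + 0) = (1 / n : ℝ) := by
    rw [one_mul, add_zero, ← mul_div_mul_left (1 : ℝ) n (by norm_num : (9 : ℝ) ≠ 0), mul_one]
  rw [Function.comp_apply, hexp]

lemma gridPartitionCount_rpow_le (n : ℕ) : (gridPartitionCount n : ℝ) ^ (1 / n ^ 2 : ℝ) ≤ 4 := by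
  obtain rfl | hn := eq_or_ne n 0
  · norm_num
  have hcount : (gridPartitionCount n : ℝ) ≤ 4 ^ n ^ 2 := by exact_mod_cast gridPartitionCount_le n
  calc (gridPartitionCount n : ℝ) ^ (1 / n ^ 2 : ℝ)
    _ ≤ ((4 : ℝ) ^ n ^ 2) ^ (1 / n ^ 2 : ℝ) := by gcongr
    _ = 4 := by
        rw [one_div, ← Nat.cast_pow]
        exact Real.pow_rpow_inv_natCast (by norm_num) (by positivity)

theorem grid_partition_count_lower_general :
    (3 : ℝ) ^ ((1 : ℝ) / 4) ≤
      liminf (fun n : ℕ => (gridPartitionCount n : ℝ) ^ (1 / (n : ℝ) ^ 2)) atTop := by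
  have hlim : Tendsto (fun n : ℕ => (3 : ℝ) ^ (1 / 4 : ℝ) / (9 * n : ℝ) ^ (1 / n : ℝ)) atTop
      (nhds (3 ^ (1 / 4 : ℝ))) := by
    simpa only [div_one, Pi.div_def] using
      tendsto_const_nhds.div tendsto_nine_mul_rpow_inv one_ne_zero
  have hle : ∀ᶠ n : ℕ in atTop, (3 : ℝ) ^ (1 / 4 : ℝ) / (9 * n : ℝ) ^ (1 / n : ℝ) ≤
      (gridPartitionCount n : ℝ) ^ (1 / n ^ 2 : ℝ) := by
    filter_upwards [eventually_ge_atTop 2] with n hn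
    exact (div_le_iff₀' (by positivity)).2 (three_rpow_quarter_le hn)
  have hbdd : IsBoundedUnder (· ≤ ·) atTop
      fun n : ℕ => (gridPartitionCount n : ℝ) ^ (1 / n ^ 2 : ℝ) :=
    isBoundedUnder_of ⟨4, gridPartitionCount_rpow_le⟩
  exact hlim.liminf_eq.ge.trans
    (liminf_le_liminf hle hlim.isBoundedUnder_ge hbdd.isCoboundedUnder_ge)

theorem grid_partition_count_lower :
    (3 : ℝ) ^ ((1 : ℝ) / 6) ≤
      liminf (fun n : ℕ => (gridPartitionCount n : ℝ) ^ (1 / (n : ℝ) ^ 2)) atTop :=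
  (Real.rpow_le_rpow_of_exponent_le (by norm_num) (by norm_num)).trans
    grid_partition_count_lower_general
end

section
/- If $n \equiv 0 \pmod 6$ and $n \ge 6$, then the number of partitions of the vertex set of the $n\times n$ grid graph into $n$ parts, each of size $n$ and each inducing a connected subgraph, is at least $3^{n(n-3)/6}$. -/
open Filter

/-!
Write `n = 2ak` (here `a = 3`) and cut the grid into `k · a` blocks of `2a` rows and `2k` columns,
each of size `2n`. In every block choose digits `d₀ = 0, d₁, …, d_{2k} = 0` in `{0, …, a - 1}` and
split its `j`-th column after `a + d_{j+1} - d_j` cells. The deviations from `a` telescope, so both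
pieces have `n` cells; they are connected because no column uses up all `2a` cells, so that each
piece contains a full row of the block. The heights determine the digits, hence distinct choices of
the `ka(2k - 1) = n(n - a)/(2a)` free digits give distinct partitions.
-/

section Connectivity

theorem hasse_induce_preconnected_of_succ {α : Type*} [LinearOrder α] [SuccOrder α]
    [IsSuccArchimedean α] (s : Set α) [s.OrdConnected] :
    ((SimpleGraph.hasse α).induce s).Preconnected := by
  have range_ordConnected : (Set.range (OrderEmbedding.subtype (· ∈ s))).OrdConnected := by
    simpa using ‹s.OrdConnected›
  refine (SimpleGraph.hasse_preconnected_of_succ s).mono fun x y hxy => ?_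
  exact hxy.imp (·.image (OrderEmbedding.subtype (· ∈ s)) range_ordConnected)
    (·.image (OrderEmbedding.subtype (· ∈ s)) range_ordConnected)

theorem boxProd_induce_connected_of_spine {α β : Type*} {G : SimpleGraph α} {H : SimpleGraph β}
    {T : Set (α × β)} (hT : T.Nonempty) (x₀ : α) (hspine : ∀ p ∈ T, (x₀, p.2) ∈ T)
    (hrow : (H.induce {y | (x₀, y) ∈ T}).Preconnected)
    (hcol : ∀ y, (G.induce {x | (x, y) ∈ T}).Preconnected) :
    ((G □ H).induce T).Connected := by
  have reachable_spine (p : T) :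
      ((G □ H).induce T).Reachable p ⟨(x₀, p.1.2), hspine p p.2⟩ :=
    (hcol p.1.2 ⟨p.1.1, p.2⟩ ⟨x₀, hspine p p.2⟩).map
      (SimpleGraph.induceHom (SimpleGraph.boxProdLeft G H p.1.2).toHom fun _ hx => hx)
  have reachable_along_spine (p q : T) : ((G □ H).induce T).Reachable
      ⟨(x₀, p.1.2), hspine p p.2⟩ ⟨(x₀, q.1.2), hspine q q.2⟩ :=
    (hrow ⟨p.1.2, hspine p p.2⟩ ⟨q.1.2, hspine q q.2⟩).map
      (SimpleGraph.induceHom (SimpleGraph.boxProdRight G H x₀).toHom fun _ hy => hy)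
  exact
    { preconnected := fun p q =>
        (reachable_spine p).trans ((reachable_along_spine p q).trans (reachable_spine q).symm)
      nonempty := hT.to_subtype }

theorem gridGraph_eq_boxProd (n : ℕ) :
    gridGraph n = SimpleGraph.pathGraph n □ SimpleGraph.pathGraph n := by
  ext v w
  simp only [gridGraph, SimpleGraph.fromRel_adj, SimpleGraph.boxProd_adj,
    SimpleGraph.pathGraph_adj, ne_eq, Prod.ext_iff, Fin.ext_iff]
  omega

end Connectivity

section ColumnRegion

/-- The cells `(x, y)` of the `n × n` grid lying in the columns `p ≤ y < q` and, within column `y`,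
in the rows `lo y ≤ x < hi y`. -/
def columnRegion (n p q : ℕ) (lo hi : ℕ → ℕ) : Finset (Fin n × Fin n) :=
  {v | (v.2 : ℕ) ∈ Finset.Ico p q ∧ (v.1 : ℕ) ∈ Finset.Ico (lo v.2) (hi v.2)}

variable {n p q : ℕ} {lo hi : ℕ → ℕ}

theorem mem_columnRegion {v : Fin n × Fin n} : v ∈ columnRegion n p q lo hi ↔
    (v.2 : ℕ) ∈ Finset.Ico p q ∧ (v.1 : ℕ) ∈ Finset.Ico (lo v.2) (hi v.2) := by
  simp [columnRegion]

theorem card_columnRegion (hq : q ≤ n) (hhi : ∀ y ∈ Finset.Ico p q, hi y ≤ n) :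
    (columnRegion n p q lo hi).card = ∑ y ∈ Finset.Ico p q, (hi y - lo y) := by
  simp only [← Nat.card_Ico, ← Finset.card_sigma]
  refine Finset.card_bij (fun v _ => ⟨v.2, v.1⟩) ?_ ?_ ?_
  · intro v hv
    exact Finset.mem_sigma.2 (mem_columnRegion.1 hv)
  · intro v _ w _ h
    simp only [Sigma.mk.injEq, heq_eq_eq, Fin.val_inj] at h
    exact Prod.ext h.2 h.1
  · rintro ⟨y, x⟩ hyx
    obtain ⟨hy, hx⟩ := Finset.mem_sigma.1 hyx
    have hyn : y < n := (Finset.mem_Ico.1 hy).2.trans_le hq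
    have hxn : x < n := (Finset.mem_Ico.1 hx).2.trans_le (hhi y hy)
    exact ⟨(⟨x, hxn⟩, ⟨y, hyn⟩), mem_columnRegion.2 ⟨hy, hx⟩, rfl⟩

theorem columnRegion_connected (hne : (columnRegion n p q lo hi).Nonempty) (x₀ : Fin n)
    (hx₀ : ∀ y ∈ Finset.Ico p q, (x₀ : ℕ) ∈ Finset.Ico (lo y) (hi y)) :
    ((gridGraph n).induce (columnRegion n p q lo hi : Set (Fin n × Fin n))).Connected := by
  rw [gridGraph_eq_boxProd]
  refine boxProd_induce_connected_of_spine hne x₀ (fun v hv => ?_) ?_ fun y => ?_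
  · have hy := (mem_columnRegion.1 hv).1
    exact mem_columnRegion.2 ⟨hy, hx₀ v.2 hy⟩
  · have row_ordConnected :
        {y | (x₀, y) ∈ (columnRegion n p q lo hi : Set (Fin n × Fin n))}.OrdConnected := by
      refine ⟨fun y hy z hz t ht => mem_columnRegion.2 ?_⟩
      have ht' : (t : ℕ) ∈ Finset.Ico p q := Finset.mem_Ico.2
        ⟨(Finset.mem_Ico.1 (mem_columnRegion.1 hy).1).1.trans ht.1,
          lt_of_le_of_lt ht.2 (Finset.mem_Ico.1 (mem_columnRegion.1 hz).1).2⟩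
      exact ⟨ht', hx₀ t ht'⟩
    exact hasse_induce_preconnected_of_succ _
  · have column_ordConnected :
        {x | (x, y) ∈ (columnRegion n p q lo hi : Set (Fin n × Fin n))}.OrdConnected := by
      refine ⟨fun x hx z hz t ht => mem_columnRegion.2 ⟨(mem_columnRegion.1 hx).1, ?_⟩⟩
      exact Finset.mem_Ico.2 ⟨(Finset.mem_Ico.1 (mem_columnRegion.1 hx).2).1.trans ht.1,
        lt_of_le_of_lt ht.2 (Finset.mem_Ico.1 (mem_columnRegion.1 hz).2).2⟩
    exact hasse_induce_preconnected_of_succ _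

end ColumnRegion

section LabelPartition

variable {V κ κ' : Type*} [Fintype V] [DecidableEq V] [DecidableEq κ] [DecidableEq κ']

/-- The partition of a finite type into the nonempty fibres of a labelling. -/
def labelPartition (f : V → κ) : Finpartition (Finset.univ : Finset V) :=
  Finpartition.ofSetoid (Setoid.ker f)

theorem mem_part_labelPartition {f : V → κ} {v w : V} :
    w ∈ (labelPartition f).part v ↔ f w = f v :=
  Finpartition.mem_part_ofSetoid_iff_rel.trans (Setoid.ker_def.trans eq_comm)

theorem exists_eq_fiber_of_mem_labelPartition {f : V → κ} {s : Finset V}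
    (hs : s ∈ (labelPartition f).parts) : ∃ v, s = ({w | f w = f v} : Finset V) := by
  obtain ⟨v, hv⟩ := (labelPartition f).nonempty_of_mem_parts hs
  refine ⟨v, ?_⟩
  ext w
  rw [← (labelPartition f).part_eq_of_mem hs hv, mem_part_labelPartition]
  simp only [Finset.mem_filter_univ]

theorem label_eq_iff_of_labelPartition_parts_eq {f : V → κ} {g : V → κ'}
    (hfg : (labelPartition f).parts = (labelPartition g).parts) (v w : V) :
    f v = f w ↔ g v = g w := by
  rw [← mem_part_labelPartition, ← mem_part_labelPartition, Finpartition.ext hfg]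

theorem isGridPartition_labelPartition {n : ℕ} {f : Fin n × Fin n → κ}
    (hcard : ∀ v, ({w | f w = f v} : Finset (Fin n × Fin n)).card = n)
    (hconn : ∀ v, ((gridGraph n).induce
      (({w | f w = f v} : Finset (Fin n × Fin n)) : Set (Fin n × Fin n))).Connected) :
    IsGridPartition n (labelPartition f).parts := by
  have parts_card : ∀ s ∈ (labelPartition f).parts, s.card = n := by
    intro s hs
    obtain ⟨v, rfl⟩ := exists_eq_fiber_of_mem_labelPartition hs
    exact hcard v
  refine ⟨?_, parts_card, ?_, fun v => (labelPartition f).existsUnique_mem (Finset.mem_univ v)⟩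
  · have count : (labelPartition f).parts.card * n = n * n := by
      simpa only [Finset.sum_const_nat parts_card, Finset.card_univ, Fintype.card_prod,
        Fintype.card_fin] using (labelPartition f).sum_card_parts
    rcases n.eq_zero_or_pos with rfl | hn
    · simp
    · exact Nat.eq_of_mul_eq_mul_right hn count
  · intro s hs
    obtain ⟨v, rfl⟩ := exists_eq_fiber_of_mem_labelPartition hs
    exact hconn v

end LabelPartition

section BlockLabel

/-- Cut the grid into blocks of `m` rows and `w` columns, and cut each block in two along a height
function: in the `b`-th band of `m` rows, the first `h b y` cells of column `y` form the first
piece. The label of a cell records its band, its strip of columns and whether it lies in the first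
piece of its block. -/
def blockLabel {n : ℕ} (m w : ℕ) (h : ℕ → ℕ → ℕ) (v : Fin n × Fin n) : ℕ × ℕ × Bool :=
  (v.1 / m, v.2 / w, decide ((v.1 : ℕ) % m < h (v.1 / m) v.2))

/-- A height function cutting every `m × w` block into two pieces of `n` cells each, both of which
contain a full row of the block. -/
structure IsBalancedCut (n m w : ℕ) (h : ℕ → ℕ → ℕ) : Prop where
  pos : ∀ b y, 0 < h b y
  lt : ∀ b y, h b y < m
  sum_first : ∀ b c, ∑ y ∈ Finset.Ico (w * c) (w * (c + 1)), h b y = n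
  sum_second : ∀ b c, ∑ y ∈ Finset.Ico (w * c) (w * (c + 1)), (m - h b y) = n

variable {n m w : ℕ} {h h' : ℕ → ℕ → ℕ}

theorem mul_div_add_one_le_of_dvd {x : ℕ} (hmn : m ∣ n) (hx : x < n) : m * (x / m + 1) ≤ n := by
  obtain ⟨k, rfl⟩ := hmn
  exact Nat.mul_le_mul_left m (Nat.div_lt_of_lt_mul hx)

theorem div_eq_iff_mem_Ico {b x : ℕ} (hm : 0 < m) :
    x / m = b ↔ x ∈ Finset.Ico (m * b) (m * (b + 1)) := by
  rw [Nat.div_eq_iff hm, Finset.mem_Ico, mul_comm m b, mul_comm m (b + 1), Nat.succ_mul]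
  omega

theorem filter_blockLabel_eq_first (hm : 0 < m) (hw : 0 < w) {b : ℕ} (c : ℕ)
    (hh : ∀ y, h b y ≤ m) :
    ({v | blockLabel m w h v = (b, c, true)} : Finset (Fin n × Fin n)) =
      columnRegion n (w * c) (w * (c + 1)) (fun _ => m * b) (fun y => m * b + h b y) := by
  ext ⟨x, y⟩
  have hhy := hh y
  have hdiv := Nat.div_add_mod (x : ℕ) m
  simp only [Finset.mem_filter_univ, mem_columnRegion, blockLabel, Prod.mk.injEq,
    decide_eq_true_eq, ← div_eq_iff_mem_Ico hw]
  rw [and_left_comm]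
  refine and_congr_right fun _ => ⟨?_, fun hx => ?_⟩
  · rintro ⟨rfl, hlt⟩
    exact Finset.mem_Ico.2 (by omega)
  · rw [Finset.mem_Ico] at hx
    obtain rfl : (x : ℕ) / m = b :=
      (div_eq_iff_mem_Ico hm).2 (Finset.mem_Ico.2 (by rw [Nat.mul_succ]; omega))
    exact ⟨rfl, by omega⟩

theorem filter_blockLabel_eq_second (hm : 0 < m) (hw : 0 < w) (b c : ℕ) :
    ({v | blockLabel m w h v = (b, c, false)} : Finset (Fin n × Fin n)) =
      columnRegion n (w * c) (w * (c + 1)) (fun y => m * b + h b y) (fun _ => m * (b + 1)) := by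
  ext ⟨x, y⟩
  have hdiv := Nat.div_add_mod (x : ℕ) m
  have hmod := Nat.mod_lt (x : ℕ) hm
  simp only [Finset.mem_filter_univ, mem_columnRegion, blockLabel, Prod.mk.injEq,
    decide_eq_false_iff_not, not_lt, ← div_eq_iff_mem_Ico hw]
  rw [and_left_comm]
  refine and_congr_right fun _ => ⟨?_, fun hx => ?_⟩
  · rintro ⟨rfl, hle⟩
    exact Finset.mem_Ico.2 (by rw [Nat.mul_succ]; omega)
  · rw [Finset.mem_Ico] at hx
    obtain rfl : (x : ℕ) / m = b := (div_eq_iff_mem_Ico hm).2 (Finset.mem_Ico.2 (by omega))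
    exact ⟨rfl, by omega⟩

theorem IsBalancedCut.fiber_card (hh : IsBalancedCut n m w h) (hmn : m ∣ n) (hwn : w ∣ n)
    (v : Fin n × Fin n) :
    ({u | blockLabel m w h u = blockLabel m w h v} : Finset (Fin n × Fin n)).card = n := by
  have hn : 0 < n := v.1.pos
  have hm := Nat.pos_of_dvd_of_pos hmn hn
  have hw := Nat.pos_of_dvd_of_pos hwn hn
  have rows_le := mul_div_add_one_le_of_dvd hmn v.1.isLt
  have cols_le := mul_div_add_one_le_of_dvd hwn v.2.isLt
  obtain ⟨b, c, t, hv⟩ : ∃ b c t, blockLabel m w h v = (b, c, t) := ⟨_, _, _, rfl⟩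
  obtain ⟨rfl, rfl, -⟩ := by simpa only [blockLabel, Prod.mk.injEq] using hv
  rw [hv]
  cases t
  · rw [filter_blockLabel_eq_second hm hw, card_columnRegion cols_le fun _ _ => rows_le]
    simpa only [Nat.mul_succ, Nat.add_sub_add_left] using hh.sum_second _ _
  · rw [filter_blockLabel_eq_first hm hw _ fun y => (hh.lt _ y).le,
      card_columnRegion cols_le fun y _ => ?_]
    · simpa only [Nat.add_sub_cancel_left] using hh.sum_first _ _
    · exact (Nat.add_le_add_left (hh.lt _ y).le _).trans rows_le

theorem IsBalancedCut.fiber_connected (hh : IsBalancedCut n m w h) (hmn : m ∣ n) (hwn : w ∣ n)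
    (v : Fin n × Fin n) : ((gridGraph n).induce
      (({u | blockLabel m w h u = blockLabel m w h v} : Finset (Fin n × Fin n)) :
        Set (Fin n × Fin n))).Connected := by
  have hn : 0 < n := v.1.pos
  have hm := Nat.pos_of_dvd_of_pos hmn hn
  have hw := Nat.pos_of_dvd_of_pos hwn hn
  have rows_le := mul_div_add_one_le_of_dvd hmn v.1.isLt
  have fiber_nonempty :
      ({u | blockLabel m w h u = blockLabel m w h v} : Finset (Fin n × Fin n)).Nonempty :=
    ⟨v, (Finset.mem_filter_univ _).2 rfl⟩
  obtain ⟨b, c, t, hv⟩ : ∃ b c t, blockLabel m w h v = (b, c, t) := ⟨_, _, _, rfl⟩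
  obtain ⟨rfl, rfl, -⟩ := by simpa only [blockLabel, Prod.mk.injEq] using hv
  rw [hv] at fiber_nonempty ⊢
  rw [Nat.mul_succ] at rows_le
  cases t
  · rw [filter_blockLabel_eq_second hm hw] at fiber_nonempty ⊢
    refine columnRegion_connected fiber_nonempty ⟨m * (v.1 / m) + (m - 1), by omega⟩ fun y _ => ?_
    have := hh.lt (v.1 / m) y
    simp only [Finset.mem_Ico, Nat.mul_succ]
    omega
  · rw [filter_blockLabel_eq_first hm hw _ fun y => (hh.lt _ y).le] at fiber_nonempty ⊢
    refine columnRegion_connected fiber_nonempty ⟨m * (v.1 / m), by omega⟩ fun y _ => ?_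
    have := hh.pos (v.1 / m) y
    simp only [Finset.mem_Ico]
    omega

theorem IsBalancedCut.isGridPartition (hh : IsBalancedCut n m w h) (hmn : m ∣ n) (hwn : w ∣ n) :
    IsGridPartition n (labelPartition (blockLabel (n := n) m w h)).parts :=
  isGridPartition_labelPartition (hh.fiber_card hmn hwn) (hh.fiber_connected hmn hwn)

theorem IsBalancedCut.height_eq_of_parts_eq (hh : IsBalancedCut n m w h)
    (hh' : IsBalancedCut n m w h')
    (hparts : (labelPartition (blockLabel (n := n) m w h)).parts =
      (labelPartition (blockLabel (n := n) m w h')).parts)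
    {b y : ℕ} (hb : m * (b + 1) ≤ n) (hy : y < n) : h b y = h' b y := by
  rw [Nat.mul_succ] at hb
  let cell (r : ℕ) (hr : r < m) : Fin n × Fin n := (⟨m * b + r, by omega⟩, ⟨y, hy⟩)
  have hm : 0 < m := (hh.pos b y).trans (hh.lt b y)
  have label_cell_eq_top_iff {g : ℕ → ℕ → ℕ} (hg : IsBalancedCut n m w g) (r : ℕ) (hr : r < m) :
      blockLabel m w g (cell r hr) = blockLabel m w g (cell 0 hm) ↔ r < g b y := by
    simp [blockLabel, cell, Nat.mul_add_div hm, Nat.div_eq_of_lt hr,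
      Nat.mod_eq_of_lt hr, Nat.mul_div_cancel_left b hm, hg.pos b y]
  have lt_height_iff (r : ℕ) (hr : r < m) : r < h b y ↔ r < h' b y := by
    rw [← label_cell_eq_top_iff hh r hr, ← label_cell_eq_top_iff hh' r hr]
    exact label_eq_iff_of_labelPartition_parts_eq hparts _ _
  have := lt_height_iff (h b y) (hh.lt b y)
  have := lt_height_iff (h' b y) (hh'.lt b y)
  omega

end BlockLabel

section Digits

/-- The height function driven by a digit sequence in each band. The subtraction is not truncated
for digits below `a`. -/
def digitHeight (a : ℕ) (d : ℕ → ℕ → ℕ) (b y : ℕ) : ℕ :=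
  a + d b (y + 1) - d b y

variable {a : ℕ} {d d' : ℕ → ℕ → ℕ}

theorem sum_digitHeight (hd : ∀ b y, d b y ≤ a) (b : ℕ) {p q : ℕ} (hpq : p ≤ q) :
    ∑ y ∈ Finset.Ico p q, digitHeight a d b y + d b p = a * (q - p) + d b q := by
  induction q, hpq using Nat.le_induction with
  | base => simp
  | succ q hpq ih =>
    rw [Finset.sum_Ico_succ_top hpq, Nat.succ_sub hpq, Nat.mul_succ, digitHeight]
    have := hd b q
    omega

theorem isBalancedCut_digitHeight {n w : ℕ} (hn : n = a * w) (hd : ∀ b y, d b y < a)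
    (hzero : ∀ b c, d b (w * c) = 0) : IsBalancedCut n (2 * a) w (digitHeight a d) := by
  subst hn
  have height_lt (b y : ℕ) : digitHeight a d b y < 2 * a := by
    have := hd b (y + 1)
    unfold digitHeight
    omega
  have sum_block (b c : ℕ) :
      ∑ y ∈ Finset.Ico (w * c) (w * (c + 1)), digitHeight a d b y = a * w := by
    have := sum_digitHeight (fun b y => (hd b y).le) b (Nat.mul_le_mul_left w c.le_succ)
    rwa [hzero, hzero, Nat.mul_succ, Nat.add_sub_cancel_left] at this
  refine ⟨fun b y => ?_, height_lt, sum_block, fun b c => ?_⟩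
  · have := hd b y
    unfold digitHeight
    omega
  · rw [Finset.sum_tsub_distrib _ fun y _ => (height_lt b y).le, sum_block, Finset.sum_const,
      Nat.card_Ico, Nat.mul_succ, Nat.add_sub_cancel_left, smul_eq_mul,
      show w * (2 * a) = a * w + a * w by ring, Nat.add_sub_cancel]

theorem digit_eq_of_digitHeight_eq (hd : ∀ b y, d b y ≤ a) (hd' : ∀ b y, d' b y ≤ a) {b n : ℕ}
    (hstart : d b 0 = d' b 0) (hheight : ∀ y < n, digitHeight a d b y = digitHeight a d' b y)
    {y : ℕ} (hy : y ≤ n) : d b y = d' b y := by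
  induction y with
  | zero => exact hstart
  | succ y ih =>
    have digit_eq := ih (by omega)
    have height_eq := hheight y hy
    have := hd b y
    have := hd' b y
    unfold digitHeight at height_eq
    omega

/-- The positions `(b, y)` of the digits that can be chosen freely: `b` is one of `k` bands, and
`y` is not on the boundary of a strip of `w` columns. -/
def freePositions (n k w : ℕ) : Finset (ℕ × ℕ) :=
  Finset.range k ×ˢ {y ∈ Finset.Ioc 0 n | ¬ w ∣ y}

theorem card_freePositions (n k w : ℕ) : (freePositions n k w).card = k * (n - n / w) := by
  have card_add := Finset.card_filter_add_card_filter_not (s := Finset.Ioc 0 n) (w ∣ ·)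
  rw [Nat.Ioc_filter_dvd_card_eq_div, Nat.card_Ioc] at card_add
  rw [freePositions, Finset.card_product, Finset.card_range]
  congr 1
  omega

/-- The extension by zero of a choice of digits on a set of positions. -/
def extendDigits {F : Finset (ℕ × ℕ)} (s : F → Fin a) (b y : ℕ) : ℕ :=
  if hby : (b, y) ∈ F then s ⟨(b, y), hby⟩ else 0

theorem extendDigits_lt (ha : 0 < a) {F : Finset (ℕ × ℕ)} (s : F → Fin a) (b y : ℕ) :
    extendDigits s b y < a := by
  unfold extendDigits
  split_ifs
  · exact (s _).isLt
  · exact ha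

theorem extendDigits_freePositions_mul {n k w : ℕ} (s : freePositions n k w → Fin a) (b c : ℕ) :
    extendDigits s b (w * c) = 0 :=
  dif_neg (by simp [freePositions])

theorem eq_of_extendDigits_eq {F : Finset (ℕ × ℕ)} {s s' : F → Fin a}
    (h : ∀ p ∈ F, extendDigits s p.1 p.2 = extendDigits s' p.1 p.2) : s = s' := by
  funext p
  simpa [extendDigits, Fin.val_inj] using h p p.2

theorem eq_of_digitHeight_extendDigits_eq (ha : 0 < a) {n k w : ℕ}
    {s s' : freePositions n k w → Fin a}
    (h : ∀ b < k, ∀ y < n,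
      digitHeight a (extendDigits s) b y = digitHeight a (extendDigits s') b y) : s = s' := by
  refine eq_of_extendDigits_eq fun ⟨b, y⟩ hby => ?_
  obtain ⟨hb, hy⟩ := Finset.mem_product.1 hby
  have hyn : y ≤ n := (Finset.mem_Ioc.1 (Finset.mem_filter.1 hy).1).2
  have digits_start : extendDigits s b 0 = extendDigits s' b 0 :=
    (extendDigits_freePositions_mul s b 0).trans (extendDigits_freePositions_mul s' b 0).symm
  exact digit_eq_of_digitHeight_eq (fun b y => (extendDigits_lt ha s b y).le)
    (fun b y => (extendDigits_lt ha s' b y).le) digits_start (h b (Finset.mem_range.1 hb)) hyn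

end Digits

theorem grid_partition_count_lower_explicit_general {a n : ℕ} (ha : 0 < a) (hn : 2 * a ∣ n) :
    a ^ (n * (n - a) / (2 * a)) ≤ gridPartitionCount n := by
  obtain ⟨k, rfl⟩ := hn
  set n := 2 * a * k with hn
  have size_eq : n = a * (2 * k) := by rw [hn]; ring
  have exponent_eq : n * (n - a) / (2 * a) = (freePositions n k (2 * k)).card := by
    rcases k.eq_zero_or_pos with rfl | hk
    · simp [hn, card_freePositions]
    · rw [card_freePositions, Nat.div_eq_of_eq_mul_left (by omega) size_eq, hn, mul_assoc (2 * a),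
        Nat.mul_div_cancel_left _ (by omega)]
  have balanced (s : freePositions n k (2 * k) → Fin a) :
      IsBalancedCut n (2 * a) (2 * k) (digitHeight a (extendDigits s)) :=
    isBalancedCut_digitHeight size_eq (extendDigits_lt ha s) (extendDigits_freePositions_mul s)
  let partition (s : freePositions n k (2 * k) → Fin a) : {P // IsGridPartition n P} :=
    ⟨_, (balanced s).isGridPartition (Dvd.intro k rfl) (Dvd.intro_left a size_eq.symm)⟩
  have partition_injective : Function.Injective partition := fun s s' hss' =>
    eq_of_digitHeight_extendDigits_eq ha fun _ hb _ hy =>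
      (balanced s).height_eq_of_parts_eq (balanced s') (Subtype.ext_iff.1 hss')
        (Nat.mul_le_mul_left _ hb) hy
  calc a ^ (n * (n - a) / (2 * a))
      = Nat.card (freePositions n k (2 * k) → Fin a) := by simp [exponent_eq]
    _ ≤ gridPartitionCount n := Nat.card_le_card_of_injective partition partition_injective

theorem grid_partition_count_lower_explicit (n : ℕ) (h6 : n % 6 = 0) (hn : 6 ≤ n) :
    3 ^ (n * (n - 3) / 6) ≤ gridPartitionCount n :=
  grid_partition_count_lower_explicit_general three_pos (Nat.dvd_of_mod_eq_zero h6)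
end

section
/- Let $G$ be a finite connected simple graph and let $k \ge 1$. Every partition of the vertex set of $G$ into $k$ nonempty parts, each inducing a connected subgraph, can be obtained from some spanning tree of $G$ by deleting $k-1$ of its edges and taking the vertex sets of the resulting $k$ components. Consequently, the number of such partitions is at most $\tau(G)\binom{|E(G)|}{k-1}$, where $\tau(G)$ is the number of spanning trees of $G$. -/
/-- `P` is a partition of the vertex set of `G` into nonempty parts, each of which
induces a connected subgraph of `G`. -/
def IsConnPartition {V : Type*} (G : SimpleGraph V) (P : Finset (Finset V)) : Prop :=
  (∀ s ∈ P, (↑s : Set V).Nonempty ∧ (G.induce (↑s : Set V)).Connected) ∧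
  (∀ v : V, ∃! s, s ∈ P ∧ v ∈ s)

/-!
Keep only the edges of `G` inside the parts of `P`, and let `H` be a spanning forest of the
resulting graph: its components are exactly the parts. Extend `H` to a spanning tree `T` of `G`;
deleting `F = E(T) \ E(H)` from `T` recovers the parts. Every edge of a forest is a bridge, so each
deletion raises the number of components by one, and hence `|F| = |P| - 1`. Since `(T, F)`
determines `P`, there are at most as many partitions as such pairs.
-/

open SimpleGraph

section ComponentCount

variable {V : Type*} {G : SimpleGraph V} {u v : V}

lemma reachable_deleteEdges_or_of_reachable {a : V} (h : G.Reachable a u) :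
    (G.deleteEdges {s(u, v)}).Reachable a u ∨ (G.deleteEdges {s(u, v)}).Reachable a v := by
  obtain ⟨p⟩ := h
  induction p with
  | nil => exact .inl .rfl
  | @cons a b u hab _ ih =>
    by_cases he : s(a, b) = s(u, v)
    · obtain ⟨rfl, -⟩ | ⟨rfl, -⟩ := Sym2.eq_iff.mp he
      exacts [.inl .rfl, .inr .rfl]
    · have hab' : (G.deleteEdges {s(u, v)}).Adj a b := by simpa [he] using hab
      exact ih.imp hab'.reachable.trans hab'.reachable.trans

lemma reachable_deleteEdges_of_not_reachable {a b : V} (h : G.Reachable a b)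
    (ha : ¬ (G.deleteEdges {s(u, v)}).Reachable a v)
    (hb : ¬ (G.deleteEdges {s(u, v)}).Reachable b v) :
    (G.deleteEdges {s(u, v)}).Reachable a b := by
  classical
  by_cases hau : G.Reachable a u
  · have ha' := (reachable_deleteEdges_or_of_reachable hau).resolve_right ha
    have hb' := (reachable_deleteEdges_or_of_reachable (h.symm.trans hau)).resolve_right hb
    exact ha'.trans hb'.symm
  · obtain ⟨p⟩ := h
    refine ⟨p.toDeleteEdge _ fun he => hau ?_⟩
    exact ⟨p.takeUntil u (p.fst_mem_support_of_mem_edges he)⟩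

lemma enatCard_connectedComponent_deleteEdges_singleton (huv : G.Adj u v)
    (hbridge : G.IsBridge s(u, v)) :
    ENat.card (G.deleteEdges {s(u, v)}).ConnectedComponent =
      ENat.card G.ConnectedComponent + 1 := by
  set H := G.deleteEdges {s(u, v)}
  let f (c : {c // c ≠ H.connectedComponentMk v}) : G.ConnectedComponent :=
    c.1.map (.ofLE (deleteEdges_le _))
  -- A bridge splits one component of `G` in two; discarding the half of `v` undoes the splitting.
  have hf : f.Bijective := by
    constructor
    · rintro ⟨⟨a⟩, ha⟩ ⟨⟨b⟩, hb⟩ hab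
      exact Subtype.ext <| ConnectedComponent.sound <|
        reachable_deleteEdges_of_not_reachable (ConnectedComponent.exact hab)
          (mt ConnectedComponent.sound ha) (mt ConnectedComponent.sound hb)
    · rintro ⟨a⟩
      by_cases hav : H.Reachable a v
      · refine ⟨⟨H.connectedComponentMk u, mt ConnectedComponent.exact hbridge⟩, ?_⟩
        exact ConnectedComponent.sound (huv.reachable.trans (hav.mono (deleteEdges_le _)).symm)
      · exact ⟨⟨H.connectedComponentMk a, mt ConnectedComponent.exact hav⟩, rfl⟩
  classical
  calc
    ENat.card H.ConnectedComponent
        = ENat.card ({c // c ≠ H.connectedComponentMk v} ⊕ Unit) :=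
      ENat.card_congr ((Equiv.optionSubtypeNe _).symm.trans (Equiv.optionEquivSumPUnit _))
    _ = ENat.card G.ConnectedComponent + 1 := by
      rw [ENat.card_sum, ENat.card_congr (.ofBijective f hf)]
      simp

lemma enatCard_connectedComponent_deleteEdges_of_finite (hG : G.IsAcyclic) {F : Set (Sym2 V)}
    (hF : F ⊆ G.edgeSet) (hfin : F.Finite) :
    ENat.card (G.deleteEdges F).ConnectedComponent =
      ENat.card G.ConnectedComponent + F.encard := by
  induction F, hfin using Set.Finite.induction_on with
  | empty => simp
  | @insert e F he _ ih =>
    obtain ⟨heG, hFG⟩ := Set.insert_subset_iff.mp hF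
    induction e with | h u v
    have huv : (G.deleteEdges F).Adj u v := deleteEdges_adj.mpr ⟨heG, he⟩
    have hbridge := isAcyclic_iff_forall_adj_isBridge.mp (hG.anti (deleteEdges_le F)) huv
    rw [← Set.union_singleton, ← deleteEdges_deleteEdges,
      enatCard_connectedComponent_deleteEdges_singleton huv hbridge, ih hFG,
      Set.union_singleton, Set.encard_insert_of_notMem he, add_assoc]

lemma enatCard_connectedComponent_le_of_le {H : SimpleGraph V} (h : H ≤ G) :
    ENat.card G.ConnectedComponent ≤ ENat.card H.ConnectedComponent :=
  ENat.card_le_card_of_injective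
    (Function.injective_surjInv (ConnectedComponent.surjective_map_ofLE h))

theorem enatCard_connectedComponent_deleteEdges (hG : G.IsAcyclic) {F : Set (Sym2 V)}
    (hF : F ⊆ G.edgeSet) :
    ENat.card (G.deleteEdges F).ConnectedComponent =
      ENat.card G.ConnectedComponent + F.encard := by
  obtain hfin | hinf := F.finite_or_infinite
  · exact enatCard_connectedComponent_deleteEdges_of_finite hG hF hfin
  · rw [hinf.encard_eq, add_top, ENat.eq_top_iff_forall_ge]
    intro n
    obtain ⟨F', hF', hn⟩ := Set.exists_subset_encard_eq (s := F) (k := n) (by simp [hinf.encard_eq])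
    calc
      (n : ℕ∞) ≤ ENat.card G.ConnectedComponent + F'.encard := hn ▸ le_add_self
      _ = ENat.card (G.deleteEdges F').ConnectedComponent :=
        (enatCard_connectedComponent_deleteEdges_of_finite hG (hF'.trans hF)
          (Set.finite_of_encard_eq_coe hn)).symm
      _ ≤ ENat.card (G.deleteEdges F).ConnectedComponent :=
        enatCard_connectedComponent_le_of_le (deleteEdges_anti hF')

end ComponentCount

section Partition

variable {V : Type*} {G : SimpleGraph V}

/-- The vertex sets of the connected components of `G`. -/
def componentSupps (G : SimpleGraph V) : Set (Set V) :=
  Set.range (ConnectedComponent.supp : G.ConnectedComponent → Set V)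

lemma componentSupps_eq_classes (G : SimpleGraph V) :
    componentSupps G = G.reachableSetoid.classes := by
  ext s
  simp only [componentSupps, Set.mem_range, ConnectedComponent.exists]
  refine exists_congr fun v => ?_
  rw [eq_comm]
  congr! 2
  ext w
  exact ConnectedComponent.eq

lemma encard_componentSupps (G : SimpleGraph V) :
    (componentSupps G).encard = ENat.card G.ConnectedComponent := by
  rw [componentSupps, ← Set.image_univ, ConnectedComponent.supp_injective.encard_image,
    Set.encard_univ]

/-- `P` is a partition of `V` into parts that induce connected subgraphs of `G`. In contrast to
`IsConnPartition`, neither the parts nor their number need to be finite. -/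
structure IsConnSetPartition (G : SimpleGraph V) (P : Set (Set V)) : Prop where
  isPartition : Setoid.IsPartition P
  preconnected : ∀ s ∈ P, (G.induce s).Preconnected

/-- The subgraph of `G` on all of `V` that keeps the edges with both ends in the same part
of `P`. -/
def partGraph (G : SimpleGraph V) (P : Set (Set V)) : SimpleGraph V :=
  ⨆ s ∈ P, (G.induce s).spanningCoe

lemma partGraph_le (G : SimpleGraph V) (P : Set (Set V)) : partGraph G P ≤ G :=
  iSup₂_le fun s _ => spanningCoe_induce_le G s

variable {P : Set (Set V)}

lemma partGraph_adj {u v : V} :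
    (partGraph G P).Adj u v ↔ ∃ s ∈ P, u ∈ s ∧ v ∈ s ∧ G.Adj u v := by
  simp only [partGraph, iSup_adj, map_adj, comap_adj, Function.Embedding.subtype_apply,
    Subtype.exists, exists_and_left, exists_prop, ↓existsAndEq, and_true, true_and]
  tauto

lemma IsConnSetPartition.reachableSetoid_partGraph (hP : IsConnSetPartition G P) :
    (partGraph G P).reachableSetoid = Setoid.mkClasses P hP.isPartition.2 := by
  ext u v
  constructor
  · rintro ⟨p⟩
    induction p with
    | nil => exact Setoid.refl' _ _
    | @cons u v w huv _ ih =>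
      refine Setoid.trans' _ ?_ ih
      obtain ⟨s, hs, hu, hv, -⟩ := partGraph_adj.mp huv
      intro t ht hut
      rwa [Setoid.eq_of_mem_eqv_class hP.isPartition.2 ht hut hs hu]
  · intro huv
    obtain ⟨s, ⟨hs, hu⟩, -⟩ := hP.isPartition.2 u
    have hle : (G.induce s).spanningCoe ≤ partGraph G P :=
      le_iSup₂_of_le s hs le_rfl
    exact (hP.preconnected s hs ⟨u, hu⟩ ⟨v, huv s hs hu⟩).map
      ((Hom.ofLE hle).comp (Embedding.spanningCoe _).toHom)

lemma IsConnSetPartition.componentSupps_partGraph (hP : IsConnSetPartition G P) :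
    componentSupps (partGraph G P) = P := by
  rw [componentSupps_eq_classes, hP.reachableSetoid_partGraph, Setoid.classes_mkClasses P hP.1]

lemma exists_isAcyclic_le_componentSupps_eq (G : SimpleGraph V) :
    ∃ H ≤ G, H.IsAcyclic ∧ componentSupps H = componentSupps G := by
  obtain ⟨H, hHG, hH, hreach⟩ := G.exists_isAcyclic_reachable_eq_le
  refine ⟨H, hHG, hH, ?_⟩
  simp only [componentSupps_eq_classes, reachableSetoid, hreach]

lemma encard_componentSupps_deleteEdges {T : SimpleGraph V} (hT : T.IsTree) {F : Set (Sym2 V)}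
    (hF : F ⊆ T.edgeSet) : (componentSupps (T.deleteEdges F)).encard = F.encard + 1 := by
  have hone : ENat.card T.ConnectedComponent = 1 := by
    have := hT.connected.nonempty
    have := hT.connected.preconnected.subsingleton_connectedComponent
    exact ENat.card_eq_one_iff_unique.mpr (nonempty_unique _)
  rw [encard_componentSupps, enatCard_connectedComponent_deleteEdges hT.isAcyclic hF, hone,
    add_comm]

lemma IsConnSetPartition.exists_isTree_deleteEdges (hP : IsConnSetPartition G P)
    (hG : G.Connected) {k : ℕ∞} (hk : P.encard = k + 1) :
    ∃ T ≤ G, T.IsTree ∧ ∃ F ⊆ T.edgeSet, F.encard = k ∧ componentSupps (T.deleteEdges F) = P := by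
  obtain ⟨H, hHP, hH, hsupps⟩ := exists_isAcyclic_le_componentSupps_eq (partGraph G P)
  obtain ⟨T, hHT, hTG, hT⟩ :=
    hG.exists_isTree_le_of_le_of_isAcyclic (hHP.trans (partGraph_le G P)) hH
  have hcut : componentSupps (T.deleteEdges (T.edgeSet \ H.edgeSet)) = P := by
    rw [T.deleteEdges_sdiff_eq_of_le hHT, hsupps, hP.componentSupps_partGraph]
  refine ⟨T, hTG, hT, _, Set.sdiff_subset, ?_, hcut⟩
  have hcount := encard_componentSupps_deleteEdges hT (F := T.edgeSet \ H.edgeSet) Set.sdiff_subset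
  rw [hcut, hk] at hcount
  exact (WithTop.add_right_cancel ENat.one_ne_top hcount).symm

open scoped Cardinal in
theorem partition_from_spanning_tree_general (hG : G.Connected) (k : ℕ∞) :
    (∀ P : Set (Set V), IsConnSetPartition G P → P.encard = k + 1 →
      ∃ T ≤ G, T.IsTree ∧ ∃ F ⊆ T.edgeSet, F.encard = k ∧ componentSupps (T.deleteEdges F) = P) ∧
    #{P : Set (Set V) // IsConnSetPartition G P ∧ P.encard = k + 1} ≤
      #{T : SimpleGraph V // T ≤ G ∧ T.IsTree} *
        #{F : Set (Sym2 V) // F ⊆ G.edgeSet ∧ F.encard = k} := by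
  refine ⟨fun P hP hk => hP.exists_isTree_deleteEdges hG hk, ?_⟩
  choose T hTG hT F hFT hF hsupps using
    fun P : {P : Set (Set V) // IsConnSetPartition G P ∧ P.encard = k + 1} =>
      P.2.1.exists_isTree_deleteEdges hG P.2.2
  rw [Cardinal.mul_def]
  refine Cardinal.mk_le_of_injective (f := fun P =>
    (⟨T P, hTG P, hT P⟩, ⟨F P, (hFT P).trans (edgeSet_mono (hTG P)), hF P⟩)) fun P Q hPQ => ?_
  simp only [Prod.mk.injEq, Subtype.mk.injEq] at hPQ
  rw [Subtype.ext_iff, ← hsupps P, hPQ.1, hPQ.2, hsupps Q]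

/-- The parts of `P` as sets instead of finite sets. -/
def partSets (P : Finset (Finset V)) : Set (Set V) :=
  (↑) '' (P : Set (Finset V))

lemma mem_partSets {P : Finset (Finset V)} {s : Finset V} : (s : Set V) ∈ partSets P ↔ s ∈ P := by
  simp [partSets]

lemma partSets_injective : Function.Injective (partSets (V := V)) :=
  Finset.coe_injective.image_injective.comp Finset.coe_injective

lemma encard_partSets (P : Finset (Finset V)) : (partSets P).encard = P.card := by
  rw [partSets, Finset.coe_injective.encard_image, Set.encard_coe_eq_coe_finsetCard]

lemma IsConnPartition.isConnSetPartition_partSets {P : Finset (Finset V)}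
    (hP : IsConnPartition G P) : IsConnSetPartition G (partSets P) where
  isPartition := by
    refine ⟨?_, fun v => ?_⟩
    · rintro ⟨s, hs, hempty⟩
      exact (hP.1 s hs).1.ne_empty hempty
    · obtain ⟨s, ⟨hs, hv⟩, huniq⟩ := hP.2 v
      refine ⟨s, ⟨mem_partSets.mpr hs, hv⟩, ?_⟩
      rintro _ ⟨⟨t, ht, rfl⟩, hvt⟩
      rw [huniq t ⟨ht, hvt⟩]
  preconnected := by
    rintro _ ⟨s, hs, rfl⟩
    exact (hP.1 s hs).2.preconnected

lemma IsConnPartition.exists_isTree_deleteEdges {P : Finset (Finset V)} (hP : IsConnPartition G P)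
    (hG : G.Connected) {k : ℕ} (hk : P.card = k + 1) :
    ∃ T : SimpleGraph V, T ≤ G ∧ T.IsTree ∧ ∃ F : Set (Sym2 V), F ⊆ T.edgeSet ∧ F.ncard = k ∧
      ∀ s : Finset V,
        s ∈ P ↔ ∃ c : (T.deleteEdges F).ConnectedComponent, (↑s : Set V) = c.supp := by
  obtain ⟨T, hTG, hT, F, hFT, hF, hsupps⟩ :=
    (partition_from_spanning_tree_general hG k).1 _ hP.isConnSetPartition_partSets
      (by rw [encard_partSets, hk, Nat.cast_succ])
  refine ⟨T, hTG, hT, F, hFT, by rw [Set.ncard, hF, ENat.toNat_natCast], fun s => ?_⟩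
  rw [← mem_partSets, ← hsupps]
  exact exists_congr fun c => eq_comm

end Partition

lemma natCard_subset_encard_eq {α : Type*} {s : Set α} (hs : s.Finite) (k : ℕ) :
    Nat.card {t : Set α // t ⊆ s ∧ t.encard = k} = s.ncard.choose k := by
  lift s to Finset α using hs
  have himage : {t : Set α | t ⊆ s ∧ t.encard = k} =
      (↑) '' (s.powersetCard k : Set (Finset α)) := by
    ext t
    constructor
    · rintro ⟨hts, htk⟩
      lift t to Finset α using s.finite_toSet.subset hts
      exact ⟨t, by simpa using ⟨hts, by simpa using htk⟩, rfl⟩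
    · rintro ⟨t, ht, rfl⟩
      simpa using ht
  exact (congrArg Set.ncard himage).trans <| by
    rw [Set.ncard_image_of_injective _ Finset.coe_injective, Set.ncard_coe_finset,
      Finset.card_powersetCard, Set.ncard_coe_finset]

lemma natCard_isConnPartition_le {V : Type*} [Finite V] {G : SimpleGraph V} (hG : G.Connected)
    (k : ℕ) :
    Nat.card {P : Finset (Finset V) // IsConnPartition G P ∧ P.card = k + 1} ≤
      Nat.card {T : SimpleGraph V // T ≤ G ∧ T.IsTree} * (G.edgeSet.ncard).choose k := by
  calc
    Nat.card {P : Finset (Finset V) // IsConnPartition G P ∧ P.card = k + 1}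
        ≤ Nat.card {P : Set (Set V) // IsConnSetPartition G P ∧ P.encard = k + 1} :=
      Nat.card_le_card_of_injective
        (fun P => ⟨partSets P, P.2.1.isConnSetPartition_partSets,
          by rw [encard_partSets, P.2.2, Nat.cast_succ]⟩)
        fun P Q hPQ => Subtype.ext (partSets_injective (congrArg Subtype.val hPQ))
    _ ≤ Nat.card {T : SimpleGraph V // T ≤ G ∧ T.IsTree} *
          Nat.card {F : Set (Sym2 V) // F ⊆ G.edgeSet ∧ F.encard = k} := by
      simp_rw [Nat.card, ← Cardinal.toNat_mul]
      exact Cardinal.toNat_le_toNat (partition_from_spanning_tree_general hG k).2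
        (Cardinal.mul_lt_aleph0 Cardinal.mk_lt_aleph0 Cardinal.mk_lt_aleph0)
    _ = Nat.card {T : SimpleGraph V // T ≤ G ∧ T.IsTree} * (G.edgeSet.ncard).choose k := by
      rw [natCard_subset_encard_eq G.edgeSet.toFinite]

theorem partition_from_spanning_tree {V : Type*} [Fintype V] (G : SimpleGraph V)
    (hG : G.Connected) (k : ℕ) (hk : 1 ≤ k) :
    (∀ P : Finset (Finset V), IsConnPartition G P → P.card = k →
      ∃ T : SimpleGraph V, T ≤ G ∧ T.IsTree ∧
        ∃ F : Set (Sym2 V), F ⊆ T.edgeSet ∧ F.ncard = k - 1 ∧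
          ∀ s : Finset V,
            s ∈ P ↔ ∃ c : (T.deleteEdges F).ConnectedComponent, (↑s : Set V) = c.supp) ∧
    Nat.card {P : Finset (Finset V) // IsConnPartition G P ∧ P.card = k} ≤
      Nat.card {T : SimpleGraph V // T ≤ G ∧ T.IsTree} * (G.edgeSet.ncard).choose (k - 1) := by
  obtain ⟨k, rfl⟩ := Nat.exists_eq_add_of_le' hk
  exact ⟨fun P hP hPk => hP.exists_isTree_deleteEdges hG hPk, natCard_isConnPartition_le hG k⟩
end

section
/- Let $P_n$ denote the number of partitions of the vertex set of the $n\times n$ grid graph into $n$ parts, each of size $n$ and each inducing a connected subgraph, and let $\tau(G_n)$ denote the number of spanning trees of the $n\times n$ grid graph. Then for all $n \ge 1$, $P_n \le \tau(G_n)\binom{2n(n-1)}{n-1}$. -/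
open Filter

/-- The number of spanning trees of the n × n grid graph. -/
noncomputable def gridSpanningTreeCount (n : ℕ) : ℕ :=
  Nat.card {T : SimpleGraph (Fin n × Fin n) // T ≤ gridGraph n ∧ T.IsTree}

/-!
Given a partition of a connected graph into `k` connected parts, choose a spanning tree of each
part. Together they form a spanning forest `F` with `k` components, which extends to a spanning
tree `T` of the whole graph. Exactly `k - 1` edges of `T` lie outside `F`, and deleting them from
`T` recovers the partition as the set of components. So the partition is determined by `T` and a
choice of `k - 1` of its `|V| - 1` edges. For the grid, `|V| - 1 = n² - 1 ≤ 2n(n - 1)`.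
-/

section Components

variable {V : Type*} {G : SimpleGraph V}

/-- The vertex sets of the connected components of `G`. -/
def componentSets (G : SimpleGraph V) : Set (Set V) :=
  Set.range fun C : G.ConnectedComponent => C.supp

theorem ncard_componentSets (G : SimpleGraph V) :
    (componentSets G).ncard = Nat.card G.ConnectedComponent := by
  rw [componentSets, ← Nat.card_coe_set_eq]
  exact Nat.card_range_of_injective SimpleGraph.ConnectedComponent.supp_injective

theorem bijective_sigma_mapEdgeSet_toSimpleGraph_hom (G : SimpleGraph V) :
    Function.Bijective fun e : Σ C : G.ConnectedComponent, C.toSimpleGraph.edgeSet =>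
      e.1.toSimpleGraph_hom.mapEdgeSet e.2 := by
  constructor
  · rintro ⟨C, ⟨e, he⟩⟩ ⟨C', ⟨e', he'⟩⟩ h
    replace h : e.map Subtype.val = e'.map Subtype.val := congrArg Subtype.val h
    obtain rfl : C = C' := by
      induction e with | _ u v =>
      obtain ⟨w, -, hw⟩ := Sym2.mem_map.1 (h ▸ Sym2.mem_map.2 ⟨u, Sym2.mem_mk_left u v, rfl⟩)
      exact SimpleGraph.ConnectedComponent.eq_of_common_vertex u.2 (hw ▸ w.2)
    obtain rfl := Sym2.map.injective Subtype.val_injective h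
    rfl
  · rintro ⟨e, he⟩
    induction e with | _ u v =>
    have hu : u ∈ G.connectedComponentMk u := rfl
    have hv : v ∈ G.connectedComponentMk u :=
      SimpleGraph.ConnectedComponent.sound (SimpleGraph.Adj.reachable he).symm
    exact ⟨⟨_, s(⟨u, hu⟩, ⟨v, hv⟩), he⟩, rfl⟩

theorem card_edgeSet_add_card_connectedComponent_of_isAcyclic [Finite V] (hG : G.IsAcyclic) :
    Nat.card G.edgeSet + Nat.card G.ConnectedComponent = Nat.card V := by
  have := Fintype.ofFinite G.ConnectedComponent
  calc Nat.card G.edgeSet + Nat.card G.ConnectedComponent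
    _ = ∑ C : G.ConnectedComponent, (Nat.card C.toSimpleGraph.edgeSet + 1) := by
      rw [← Nat.card_congr (.ofBijective _ (bijective_sigma_mapEdgeSet_toSimpleGraph_hom G)),
        Nat.card_sigma, Finset.sum_add_distrib, Finset.sum_const, smul_eq_mul, mul_one,
        Finset.card_univ, ← Nat.card_eq_fintype_card]
    _ = ∑ C : G.ConnectedComponent, Nat.card C := Finset.sum_congr rfl fun C _ =>
      (SimpleGraph.isTree_iff_connected_and_card.1 (hG.isTree_connectedComponent C)).2
    _ = Nat.card V := by
      rw [← Nat.card_sigma]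
      exact Nat.card_congr (Equiv.sigmaFiberEquiv G.connectedComponentMk)

theorem ncard_edgeSet_sdiff_add_one [Finite V] {T F : SimpleGraph V} (hT : T.IsTree)
    (hFT : F ≤ T) : (T.edgeSet \ F.edgeSet).ncard + 1 = Nat.card F.ConnectedComponent := by
  have hF := card_edgeSet_add_card_connectedComponent_of_isAcyclic (hT.isAcyclic.anti hFT)
  have hT' := (SimpleGraph.isTree_iff_connected_and_card.1 hT).2
  have hdiff := Set.ncard_sdiff_add_ncard_of_subset (SimpleGraph.edgeSet_mono hFT)
  simp only [Nat.card_coe_set_eq] at hF hT'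
  omega

end Components

section ConnectedPartitions

variable {V : Type*} {G : SimpleGraph V}

/-- The partitions of the vertex set of `G` into `k` parts, each inducing a connected subgraph.
A partition is encoded as the set of its parts. -/
def connectedPartitions (G : SimpleGraph V) (k : ℕ) : Set (Set (Set V)) :=
  {c | Setoid.IsPartition c ∧ c.ncard = k ∧ ∀ s ∈ c, (G.induce s).Connected}

/-- The spanning trees of `G`, encoded as subgraphs on all of `V`. -/
def spanningTrees (G : SimpleGraph V) : Set (SimpleGraph V) :=
  {T | T ≤ G ∧ T.IsTree}

/-- The subgraph of `G` formed by the edges with both ends in a common member of `c`. -/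
def edgesWithin (G : SimpleGraph V) (c : Set (Set V)) : SimpleGraph V where
  Adj u v := G.Adj u v ∧ ∃ s ∈ c, u ∈ s ∧ v ∈ s
  symm := ⟨fun _ _ ⟨huv, s, hs, hu, hv⟩ => ⟨huv.symm, s, hs, hv, hu⟩⟩
  loopless := ⟨fun _ h => h.1.ne rfl⟩

theorem edgesWithin_le (G : SimpleGraph V) (c : Set (Set V)) : edgesWithin G c ≤ G :=
  fun _ _ h => h.1

theorem reachable_edgesWithin_iff {c : Set (Set V)} (hc : c.PairwiseDisjoint id) {s : Set V}
    (hs : s ∈ c) (hconn : (G.induce s).Preconnected) {u v : V} (hu : u ∈ s) :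
    (edgesWithin G c).Reachable u v ↔ v ∈ s := by
  constructor
  · rintro ⟨p⟩
    induction p with
    | nil => exact hu
    | cons h _ ih =>
      obtain ⟨-, t, ht, hut, hvt⟩ := h
      obtain rfl : s = t := hc.elim_set hs ht _ hu hut
      exact ih hvt
  · intro hv
    let inclusion : G.induce s →g edgesWithin G c :=
      ⟨Subtype.val, fun {a b} hab => ⟨hab, s, hs, a.2, b.2⟩⟩
    exact (hconn ⟨u, hu⟩ ⟨v, hv⟩).map inclusion

theorem componentSets_eq_of_reachable_iff {c : Set (Set V)} (hc : Setoid.IsPartition c)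
    (h : ∀ s ∈ c, ∀ u ∈ s, ∀ v, G.Reachable u v ↔ v ∈ s) : componentSets G = c := by
  have supp_eq : ∀ s ∈ c, ∀ u ∈ s, (G.connectedComponentMk u).supp = s := by
    intro s hs u hu
    ext v
    rw [SimpleGraph.ConnectedComponent.mem_supp_iff, SimpleGraph.ConnectedComponent.eq,
      SimpleGraph.reachable_comm, h s hs u hu]
  ext s
  constructor
  · rintro ⟨C, rfl⟩
    induction C using SimpleGraph.ConnectedComponent.ind with | _ u =>
    obtain ⟨s, ⟨hs, hu⟩, -⟩ := hc.2 u
    exact Set.mem_of_eq_of_mem (supp_eq s hs u hu) hs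
  · intro hs
    obtain ⟨u, hu⟩ := Setoid.nonempty_of_mem_partition hc hs
    exact ⟨G.connectedComponentMk u, supp_eq s hs u hu⟩

theorem exists_isAcyclic_componentSets_eq {c : Set (Set V)} (hc : Setoid.IsPartition c)
    (hconn : ∀ s ∈ c, (G.induce s).Connected) :
    ∃ F ≤ G, F.IsAcyclic ∧ componentSets F = c := by
  obtain ⟨F, hF, hacyclic, hreach⟩ := (edgesWithin G c).exists_isAcyclic_reachable_eq_le
  refine ⟨F, hF.trans (edgesWithin_le G c), hacyclic, componentSets_eq_of_reachable_iff hc ?_⟩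
  intro s hs u hu v
  rw [hreach, reachable_edgesWithin_iff hc.pairwiseDisjoint hs (hconn s hs).preconnected hu]

theorem exists_spanningTree_deleteEdges [Finite V] (hG : G.Connected) {k : ℕ} {c : Set (Set V)}
    (hc : c ∈ connectedPartitions G k) :
    ∃ T ∈ spanningTrees G, ∃ D ⊆ T.edgeSet, D.ncard = k - 1 ∧
      componentSets (T.deleteEdges D) = c := by
  obtain ⟨hpart, hcard, hconn⟩ := hc
  obtain ⟨F, hFG, hF, rfl⟩ := exists_isAcyclic_componentSets_eq hpart hconn
  obtain ⟨T, hFT, hTG, hT⟩ := hG.exists_isTree_le_of_le_of_isAcyclic hFG hF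
  refine ⟨T, ⟨hTG, hT⟩, T.edgeSet \ F.edgeSet, Set.sdiff_subset, ?_, ?_⟩
  · rw [← hcard, ncard_componentSets, ← ncard_edgeSet_sdiff_add_one hT hFT, Nat.add_sub_cancel]
  · rw [SimpleGraph.deleteEdges_sdiff_eq_of_le hFT]

theorem grid_partition_count_le_tree_bound_general [Finite V] (hG : G.Connected) (k : ℕ) :
    (connectedPartitions G k).ncard ≤
      (spanningTrees G).ncard * (Nat.card V - 1).choose (k - 1) := by
  let cuts (T : SimpleGraph V) : Set (Set (Sym2 V)) := {D | D ⊆ T.edgeSet ∧ D.ncard = k - 1}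
  let trees := (spanningTrees G).toFinite.toFinset
  have hcover : connectedPartitions G k ⊆
      ⋃ T ∈ trees, (fun D => componentSets (T.deleteEdges D)) '' cuts T := by
    intro c hc
    obtain ⟨T, hT, D, hD, hcard, hDc⟩ := exists_spanningTree_deleteEdges hG hc
    exact Set.mem_biUnion ((Set.Finite.mem_toFinset _).2 hT) ⟨D, ⟨hD, hcard⟩, hDc⟩
  have ncard_cuts : ∀ T ∈ trees, (cuts T).ncard = (Nat.card V - 1).choose (k - 1) := by
    intro T hT
    have hedges := (SimpleGraph.isTree_iff_connected_and_card.1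
      ((Set.Finite.mem_toFinset _).1 hT).2).2
    rw [Set.ncard_powerset_ncard T.edgeSet.toFinite, ← hedges, Nat.add_sub_cancel,
      Nat.card_coe_set_eq]
  calc (connectedPartitions G k).ncard
    _ ≤ _ := Set.ncard_le_ncard hcover
    _ ≤ ∑ T ∈ trees, ((fun D => componentSets (T.deleteEdges D)) '' cuts T).ncard :=
      Finset.set_ncard_biUnion_le _ _
    _ ≤ ∑ T ∈ trees, (Nat.card V - 1).choose (k - 1) :=
      Finset.sum_le_sum fun T hT => (Set.ncard_image_le).trans (ncard_cuts T hT).le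
    _ = (spanningTrees G).ncard * (Nat.card V - 1).choose (k - 1) := by
      rw [Finset.sum_const, smul_eq_mul, Set.ncard_eq_toFinset_card]

end ConnectedPartitions

section Grid

theorem connected_gridGraph {n : ℕ} (hn : 1 ≤ n) : (gridGraph n).Connected := by
  obtain ⟨m, rfl⟩ := Nat.exists_eq_add_of_le' hn
  rw [gridGraph_eq_boxProd]
  exact (SimpleGraph.pathGraph_connected m).boxProd (SimpleGraph.pathGraph_connected m)

theorem IsGridPartition.image_coe_mem_connectedPartitions {n : ℕ}
    {P : Finset (Finset (Fin n × Fin n))} (hP : IsGridPartition n P) :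
    (fun s : Finset (Fin n × Fin n) => (s : Set (Fin n × Fin n))) '' P ∈
      connectedPartitions (gridGraph n) n := by
  obtain ⟨hcard, -, hconn, hunique⟩ := hP
  refine ⟨⟨?_, fun v => ?_⟩, ?_, ?_⟩
  · rintro ⟨s, hs, hempty⟩
    exact (Set.nonempty_coe_sort.1 (hconn s hs).nonempty).ne_empty hempty
  · obtain ⟨s, ⟨hs, hv⟩, huniq⟩ := hunique v
    refine ⟨s, ⟨⟨s, hs, rfl⟩, hv⟩, ?_⟩
    rintro _ ⟨⟨t, ht, rfl⟩, hvt⟩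
    rw [huniq t ⟨ht, hvt⟩]
  · rw [Set.ncard_image_of_injective _ Finset.coe_injective, Set.ncard_coe_finset, hcard]
  · rintro _ ⟨s, hs, rfl⟩
    exact hconn s hs

theorem gridPartitionCount_le_ncard_connectedPartitions (n : ℕ) :
    gridPartitionCount n ≤ (connectedPartitions (gridGraph n) n).ncard :=
  Set.ncard_le_ncard_of_injOn (s := {P | IsGridPartition n P}) _
    (fun _ hP => hP.image_coe_mem_connectedPartitions)
    ((Set.image_injective.2 Finset.coe_injective).comp Finset.coe_injective).injOn

theorem card_fin_prod_sub_one_le (n : ℕ) :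
    Nat.card (Fin n × Fin n) - 1 ≤ 2 * n * (n - 1) := by
  simp only [Nat.card_prod, Nat.card_fin]
  cases n with
  | zero => simp
  | succ m =>
    rw [Nat.add_sub_cancel, Nat.sub_le_iff_le_add]
    nlinarith

end Grid

theorem grid_partition_count_le_tree_bound (n : ℕ) (hn : 1 ≤ n) :
    gridPartitionCount n ≤ gridSpanningTreeCount n * (2 * n * (n - 1)).choose (n - 1) :=
  (gridPartitionCount_le_ncard_connectedPartitions n).trans <|
    (grid_partition_count_le_tree_bound_general (connected_gridGraph hn) n).trans <|
      Nat.mul_le_mul_left _ (Nat.choose_le_choose _ (card_fin_prod_sub_one_le n))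
end
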